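/- arXiv:2001.09688 — 3 statements merged into one kernel-verified Lean document; each statement's English description precedes it below -/
import Mathlib

section
/- Let p1, q1, p2, q2 be pairwise distinct reals and X1, X2 ∈ S. Suppose X1', X2' are rank-one K-projections such that for every real λ outside {p2, q1} one has A1(λ,X1) B2(λ,X2) = B2(λ,X2') A1(λ,X1') and Ã1(λ,X1) B̃2(λ,X2) = B̃2(λ,X2') Ã1(λ,X1'). Assume the trace denominators below are nonzero. Then X1' = A2(p1,X2) X1 B̃2(q1,X2) / tr[A2(p1,X2) X1 B̃2(q1,X2) K] and X2' = A1(p2,X1) X2 B̃1(q2,X1) / tr[A1(p2,X1) X2 B̃1(q2,X1) K]; that is, (X1',X2') = T(p1,q1;p2,q2)(X1,X2). -/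
open Matrix

/-- The space of real `m × n` matrices. -/
abbrev Mat (m n : ℕ) := Matrix (Fin m) (Fin n) ℝ

/-- `X` is a rank-one `K`-projection, i.e. `X ∈ S`. -/
def InS {m n : ℕ} (K : Matrix (Fin n) (Fin m) ℝ) (X : Mat m n) : Prop :=
  X * K * X = X ∧ X.rank = 1

/-- `A(p,q,λ,X) = 1ₘ − ((p−q)/(λ−q)) X K`. -/
noncomputable def Amat {m n : ℕ} (K : Matrix (Fin n) (Fin m) ℝ) (p q lam : ℝ) (X : Mat m n) :
    Matrix (Fin m) (Fin m) ℝ :=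
  1 - ((p - q) / (lam - q)) • (X * K)

/-- `Ã(p,q,λ,X) = 1ₙ − ((p−q)/(λ−q)) K X`. -/
noncomputable def Atil {m n : ℕ} (K : Matrix (Fin n) (Fin m) ℝ) (p q lam : ℝ) (X : Mat m n) :
    Matrix (Fin n) (Fin n) ℝ :=
  1 - ((p - q) / (lam - q)) • (K * X)

/-- `B(p,q,λ,X) = 1ₘ + ((p−q)/(λ−p)) X K`. -/
noncomputable def Bmat {m n : ℕ} (K : Matrix (Fin n) (Fin m) ℝ) (p q lam : ℝ) (X : Mat m n) :
    Matrix (Fin m) (Fin m) ℝ :=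
  1 + ((p - q) / (lam - p)) • (X * K)

/-- `B̃(p,q,λ,X) = 1ₙ + ((p−q)/(λ−p)) K X`. -/
noncomputable def Btil {m n : ℕ} (K : Matrix (Fin n) (Fin m) ℝ) (p q lam : ℝ) (X : Mat m n) :
    Matrix (Fin n) (Fin n) ℝ :=
  1 + ((p - q) / (lam - p)) • (K * X)

/-- `α₁₂⁻¹ = 1 − ((p1−q1)(p2−q2))/((p2−p1)(q2−q1)) · tr(K X1 K X2)`. -/
noncomputable def adenom {m n : ℕ} (K : Matrix (Fin n) (Fin m) ℝ) (p1 q1 p2 q2 : ℝ)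
    (X1 X2 : Mat m n) : ℝ :=
  1 - (p1 - q1) * (p2 - q2) / ((p2 - p1) * (q2 - q1)) * (K * X1 * K * X2).trace

/-- The Yang–Baxter map `R(p1,q1;p2,q2)`. -/
noncomputable def Rmap {m n : ℕ} (K : Matrix (Fin n) (Fin m) ℝ) (p1 q1 p2 q2 : ℝ)
    (X : Mat m n × Mat m n) : Mat m n × Mat m n :=
  ((adenom K p1 q1 p2 q2 X.1 X.2)⁻¹ •
      ((1 - ((p2 - q2) / (p2 - p1)) • (X.2 * K)) * X.1 *
        (1 - ((p2 - q2) / (q1 - q2)) • (K * X.2))),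
   (adenom K p1 q1 p2 q2 X.1 X.2)⁻¹ •
      ((1 - ((p1 - q1) / (q2 - q1)) • (X.1 * K)) * X.2 *
        (1 - ((p1 - q1) / (p1 - p2)) • (K * X.1))))

/-- Trace denominator of the first component of the map `T`:
`tr[A₂(p1,X2) X1 B̃₂(q1,X2) K]`. -/
noncomputable def Tden1 {m n : ℕ} (K : Matrix (Fin n) (Fin m) ℝ) (p1 q1 p2 q2 : ℝ)
    (X1 X2 : Mat m n) : ℝ :=
  (Amat K p2 q2 p1 X2 * X1 * Btil K p2 q2 q1 X2 * K).trace

/-- Trace denominator of the second component of the map `T`: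
`tr[A₁(p2,X1) X2 B̃₁(q2,X1) K]`. -/
noncomputable def Tden2 {m n : ℕ} (K : Matrix (Fin n) (Fin m) ℝ) (p1 q1 p2 q2 : ℝ)
    (X1 X2 : Mat m n) : ℝ :=
  (Amat K p1 q1 p2 X1 * X2 * Btil K p1 q1 q2 X1 * K).trace

/-- The (non-Yang–Baxter) map `T(p1,q1;p2,q2)`. -/
noncomputable def Tmap {m n : ℕ} (K : Matrix (Fin n) (Fin m) ℝ) (p1 q1 p2 q2 : ℝ)
    (X : Mat m n × Mat m n) : Mat m n × Mat m n :=
  ((Tden1 K p1 q1 p2 q2 X.1 X.2)⁻¹ • (Amat K p2 q2 p1 X.2 * X.1 * Btil K p2 q2 q1 X.2),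
   (Tden2 K p1 q1 p2 q2 X.1 X.2)⁻¹ • (Amat K p1 q1 p2 X.1 * X.2 * Btil K p1 q1 q2 X.1))

/-- Trace denominator of the first component of `T⁻¹`: `tr[B₂(q1,X2) X1 Ã₂(p1,X2) K]`. -/
noncomputable def Tinvden1 {m n : ℕ} (K : Matrix (Fin n) (Fin m) ℝ) (p1 q1 p2 q2 : ℝ)
    (X1 X2 : Mat m n) : ℝ :=
  (Bmat K p2 q2 q1 X2 * X1 * Atil K p2 q2 p1 X2 * K).trace

/-- Trace denominator of the second component of `T⁻¹`: `tr[B₁(q2,X1) X2 Ã₁(p2,X1) K]`. -/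
noncomputable def Tinvden2 {m n : ℕ} (K : Matrix (Fin n) (Fin m) ℝ) (p1 q1 p2 q2 : ℝ)
    (X1 X2 : Mat m n) : ℝ :=
  (Bmat K p1 q1 q2 X1 * X2 * Atil K p1 q1 p2 X1 * K).trace

/-- The map `Tinv(p1,q1;p2,q2)`, the inverse of `T(p1,q1;p2,q2)`. -/
noncomputable def Tinvmap {m n : ℕ} (K : Matrix (Fin n) (Fin m) ℝ) (p1 q1 p2 q2 : ℝ)
    (X : Mat m n × Mat m n) : Mat m n × Mat m n :=
  ((Tinvden1 K p1 q1 p2 q2 X.1 X.2)⁻¹ • (Bmat K p2 q2 q1 X.2 * X.1 * Atil K p2 q2 p1 X.2),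
   (Tinvden2 K p1 q1 p2 q2 X.1 X.2)⁻¹ • (Bmat K p1 q1 q2 X.1 * X.2 * Atil K p1 q1 p2 X.1))

/-- Trace denominator of the first component of `R⁻¹`: `tr[A₂(q1,X2) X1 B̃₂(p1,X2) K]`. -/
noncomputable def Rinvden1 {m n : ℕ} (K : Matrix (Fin n) (Fin m) ℝ) (p1 q1 p2 q2 : ℝ)
    (X1 X2 : Mat m n) : ℝ :=
  (Amat K p2 q2 q1 X2 * X1 * Btil K p2 q2 p1 X2 * K).trace

/-- Trace denominator of the second component of `R⁻¹`: `tr[B₁(p2,X1) X2 Ã₁(q2,X1) K]`. -/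
noncomputable def Rinvden2 {m n : ℕ} (K : Matrix (Fin n) (Fin m) ℝ) (p1 q1 p2 q2 : ℝ)
    (X1 X2 : Mat m n) : ℝ :=
  (Bmat K p1 q1 p2 X1 * X2 * Atil K p1 q1 q2 X1 * K).trace

/-- The map `Rinv(p1,q1;p2,q2)`, the inverse of `R(p1,q1;p2,q2)`. -/
noncomputable def Rinvmap {m n : ℕ} (K : Matrix (Fin n) (Fin m) ℝ) (p1 q1 p2 q2 : ℝ)
    (X : Mat m n × Mat m n) : Mat m n × Mat m n :=
  ((Rinvden1 K p1 q1 p2 q2 X.1 X.2)⁻¹ • (Amat K p2 q2 q1 X.2 * X.1 * Btil K p2 q2 p1 X.2),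
   (Rinvden2 K p1 q1 p2 q2 X.1 X.2)⁻¹ • (Bmat K p1 q1 p2 X.1 * X.2 * Atil K p1 q1 q2 X.1))

/-- `R` acting on components 1 and 2 of a triple. -/
noncomputable def R12t {m n : ℕ} (K : Matrix (Fin n) (Fin m) ℝ) (p1 q1 p2 q2 : ℝ)
    (X : Mat m n × Mat m n × Mat m n) : Mat m n × Mat m n × Mat m n :=
  ((Rmap K p1 q1 p2 q2 (X.1, X.2.1)).1, (Rmap K p1 q1 p2 q2 (X.1, X.2.1)).2, X.2.2)

/-- `R` acting on components 1 and 3 of a triple. -/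
noncomputable def R13t {m n : ℕ} (K : Matrix (Fin n) (Fin m) ℝ) (p1 q1 p3 q3 : ℝ)
    (X : Mat m n × Mat m n × Mat m n) : Mat m n × Mat m n × Mat m n :=
  ((Rmap K p1 q1 p3 q3 (X.1, X.2.2)).1, X.2.1, (Rmap K p1 q1 p3 q3 (X.1, X.2.2)).2)

/-- `R` acting on components 2 and 3 of a triple. -/
noncomputable def R23t {m n : ℕ} (K : Matrix (Fin n) (Fin m) ℝ) (p2 q2 p3 q3 : ℝ)
    (X : Mat m n × Mat m n × Mat m n) : Mat m n × Mat m n × Mat m n :=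
  (X.1, Rmap K p2 q2 p3 q3 (X.2.1, X.2.2))

/-- `T` acting on components 1 and 2 of a triple. -/
noncomputable def T12t {m n : ℕ} (K : Matrix (Fin n) (Fin m) ℝ) (p1 q1 p2 q2 : ℝ)
    (X : Mat m n × Mat m n × Mat m n) : Mat m n × Mat m n × Mat m n :=
  ((Tmap K p1 q1 p2 q2 (X.1, X.2.1)).1, (Tmap K p1 q1 p2 q2 (X.1, X.2.1)).2, X.2.2)

/-- `T` acting on components 1 and 3 of a triple. -/
noncomputable def T13t {m n : ℕ} (K : Matrix (Fin n) (Fin m) ℝ) (p1 q1 p3 q3 : ℝ)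
    (X : Mat m n × Mat m n × Mat m n) : Mat m n × Mat m n × Mat m n :=
  ((Tmap K p1 q1 p3 q3 (X.1, X.2.2)).1, X.2.1, (Tmap K p1 q1 p3 q3 (X.1, X.2.2)).2)

/-- `T` acting on components 2 and 3 of a triple. -/
noncomputable def T23t {m n : ℕ} (K : Matrix (Fin n) (Fin m) ℝ) (p2 q2 p3 q3 : ℝ)
    (X : Mat m n × Mat m n × Mat m n) : Mat m n × Mat m n × Mat m n :=
  (X.1, Tmap K p2 q2 p3 q3 (X.2.1, X.2.2))

/-- `T⁻¹` acting on components 2 and 3 of a triple. -/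
noncomputable def Tinv23t {m n : ℕ} (K : Matrix (Fin n) (Fin m) ℝ) (p2 q2 p3 q3 : ℝ)
    (X : Mat m n × Mat m n × Mat m n) : Mat m n × Mat m n × Mat m n :=
  (X.1, Tinvmap K p2 q2 p3 q3 (X.2.1, X.2.2))

/-- `R⁻¹` acting on components 2 and 3 of a triple. -/
noncomputable def Rinv23t {m n : ℕ} (K : Matrix (Fin n) (Fin m) ℝ) (p2 q2 p3 q3 : ℝ)
    (X : Mat m n × Mat m n × Mat m n) : Mat m n × Mat m n × Mat m n :=
  (X.1, Rinvmap K p2 q2 p3 q3 (X.2.1, X.2.2))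

/-!
Since `B(p, q, ·, ·) = A(q, p, ·, ·)`, both sides of each refactorization equation are products of
two factors of the same kind. After clearing denominators they are monic quadratic polynomials in
the spectral parameter, so their difference is affine, and agreement at two values gives agreement
everywhere, in particular at the two excluded poles. The `m × m` equation at `λ = p1` shows
`X1' = A2(p1, X2) * X1 * W` for some `W`, and the `n × n` equation at the pole `λ = q1` shows
`X1' = Z * X1 * B̃2(q1, X2)` for some `Z`. As `X1` has rank one, `X1 * M * X1` is a multiple of
`X1` for every `M`, so `X1' = X1' * K * X1'` is a multiple of `A2(p1, X2) * X1 * B̃2(q1, X2)`, and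
`tr (X1' * K) = 1` fixes the scalar. Transposition exchanges the two components, with
`(p1, q1, p2, q2)` replaced by `(q2, p2, q1, p1)`.
-/

section Factors

variable {F M : Type*} [Field F] [Ring M] [Algebra F M]

/-- The elementary Lax factor `1 - ((p - q) / (l - q)) P` in an arbitrary `F`-algebra. Applied to
`X * K` and `K * X` it gives both `A` and `Ã`; with `p` and `q` exchanged it gives `B` and `B̃`. -/
def laxFactor (p q l : F) (P : M) : M :=
  1 - ((p - q) / (l - q)) • P

/-- The elementary Lax factor multiplied by `l - q`: a monic polynomial of degree one in `l`, which
makes sense at the pole `l = q`, where `laxFactor` takes the junk value `1`. -/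
def laxPencil (p q l : F) (P : M) : M :=
  (l - q) • 1 - (p - q) • P

/-- The refactorization equation `A₁(P₁) B₂(P₂) = B₂(Q₂) A₁(Q₁)` for all values of the spectral
parameter away from the poles, with `B₂` written as the factor whose parameters are exchanged. -/
def Refactorizes (p1 q1 p2 q2 : F) (P1 P2 Q1 Q2 : M) : Prop :=
  ∀ l : F, l ≠ p2 → l ≠ q1 →
    laxFactor p1 q1 l P1 * laxFactor q2 p2 l P2 = laxFactor q2 p2 l Q2 * laxFactor p1 q1 l Q1

theorem laxFactor_swap (p q l : F) (P : M) :
    laxFactor q p l P = 1 + ((p - q) / (l - p)) • P := by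
  rw [laxFactor, ← neg_sub p q, neg_div, neg_smul, sub_neg_eq_add]

theorem laxFactor_self {p q : F} (h : p ≠ q) (P : M) : laxFactor p q p P = 1 - P := by
  rw [laxFactor, div_self (sub_ne_zero.2 h), one_smul]

theorem laxFactor_mul_laxFactor_swap {p q l : F} {P : M} (hP : IsIdempotentElem P)
    (hp : l ≠ p) (hq : l ≠ q) : laxFactor p q l P * laxFactor q p l P = 1 := by
  have hp' := sub_ne_zero.2 hp
  have hq' := sub_ne_zero.2 hq
  have cancel : (p - q) / (l - p) - (p - q) / (l - q)
      - (p - q) / (l - q) * ((p - q) / (l - p)) = 0 := by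
    field_simp
    ring
  rw [laxFactor_swap p q, laxFactor, sub_mul, mul_add, mul_add, smul_mul_smul_comm, hP.eq,
    one_mul, one_mul, mul_one]
  linear_combination (norm := module) cancel • P

theorem smul_laxFactor {q l : F} (h : l ≠ q) (p : F) (P : M) :
    (l - q) • laxFactor p q l P = laxPencil p q l P := by
  rw [laxFactor, laxPencil, smul_sub, smul_smul, mul_div_cancel₀ _ (sub_ne_zero.2 h)]

theorem laxPencil_pole (p q : F) (P : M) : laxPencil p q q P = (q - p) • P := by
  rw [laxPencil, sub_self, zero_smul, zero_sub, ← neg_smul, neg_sub]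

theorem laxPencil_mul_eq_of_eq_at_two {p q r s a b : F} {P P' Q Q' : M} (hab : a ≠ b)
    (ha : laxPencil p q a P * laxPencil r s a P' = laxPencil r s a Q' * laxPencil p q a Q)
    (hb : laxPencil p q b P * laxPencil r s b P' = laxPencil r s b Q' * laxPencil p q b Q)
    (l : F) :
    laxPencil p q l P * laxPencil r s l P' = laxPencil r s l Q' * laxPencil p q l Q := by
  have interpolation : (a - b) • (laxPencil p q l P * laxPencil r s l P') =
      (a - b) • (laxPencil r s l Q' * laxPencil p q l Q) := by
    simp only [laxPencil, sub_mul, mul_sub, smul_mul_smul_comm, one_mul, mul_one] at ha hb ⊢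
    linear_combination (norm := module) (l - b) • ha + (a - l) • hb
  exact smul_right_injective M (sub_ne_zero.2 hab) interpolation

namespace Refactorizes

variable {p1 q1 p2 q2 : F} {P1 P2 Q1 Q2 : M}

theorem laxPencil_eq_of_ne (h : Refactorizes p1 q1 p2 q2 P1 P2 Q1 Q2) {l : F} (hp : l ≠ p2)
    (hq : l ≠ q1) : laxPencil p1 q1 l P1 * laxPencil q2 p2 l P2 =
      laxPencil q2 p2 l Q2 * laxPencil p1 q1 l Q1 := by
  simp only [← smul_laxFactor hp, ← smul_laxFactor hq, smul_mul_smul_comm, h l hp hq]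
  rw [mul_comm]

theorem laxPencil_eq (h : Refactorizes p1 q1 p2 q2 P1 P2 Q1 Q2) (hp1q1 : p1 ≠ q1)
    (hp1p2 : p1 ≠ p2) (hp1q2 : p1 ≠ q2) (hq1q2 : q1 ≠ q2) (hp2q2 : p2 ≠ q2) (l : F) :
    laxPencil p1 q1 l P1 * laxPencil q2 p2 l P2 =
      laxPencil q2 p2 l Q2 * laxPencil p1 q1 l Q1 :=
  laxPencil_mul_eq_of_eq_at_two hp1q2 (h.laxPencil_eq_of_ne hp1p2 hp1q1)
    (h.laxPencil_eq_of_ne hp2q2.symm hq1q2.symm) l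

theorem residue_eq (h : Refactorizes p1 q1 p2 q2 P1 P2 Q1 Q2)
    (hdist : [p1, q1, p2, q2].Nodup) :
    P1 * laxFactor q2 p2 q1 P2 = laxFactor q2 p2 q1 Q2 * Q1 := by
  have ⟨hp1q1, hp1p2, hp1q2, hq1p2, hq1q2, hp2q2⟩ :
      p1 ≠ q1 ∧ p1 ≠ p2 ∧ p1 ≠ q2 ∧ q1 ≠ p2 ∧ q1 ≠ q2 ∧ p2 ≠ q2 := by
    simp only [List.nodup_cons, List.mem_cons, not_or] at hdist
    tauto
  have atPole := h.laxPencil_eq hp1q1 hp1p2 hp1q2 hq1q2 hp2q2 q1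
  rw [laxPencil_pole, laxPencil_pole, ← smul_laxFactor hq1p2, ← smul_laxFactor hq1p2,
    smul_mul_smul_comm, smul_mul_smul_comm, mul_comm (q1 - p1)] at atPole
  exact smul_right_injective M
    (mul_ne_zero (sub_ne_zero.2 hq1p2) (sub_ne_zero.2 hp1q1.symm)) atPole

end Refactorizes

end Factors

section RankOne

variable {F m n : Type*} [Field F] [Fintype n]

theorem exists_eq_vecMulVec_of_rank_le_one {X : Matrix m n F} (h : X.rank ≤ 1) :
    ∃ (u : m → F) (v : n → F), X = vecMulVec u v := by
  classical
  obtain ⟨u, hu⟩ := finrank_le_one_iff.1 h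
  choose v hv using fun j => hu ⟨X.col j, Pi.single j 1, mulVec_single_one X j⟩
  refine ⟨u, v, ?_⟩
  ext i j
  rw [vecMulVec_apply, mul_comm]
  exact (congrFun (congrArg Subtype.val (hv j)) i).symm

variable [Fintype m]

theorem mul_mul_self_of_rank_le_one {X : Matrix m n F} (h : X.rank ≤ 1) (Y : Matrix n m F) :
    X * Y * X = (X * Y).trace • X := by
  obtain ⟨u, v, rfl⟩ := exists_eq_vecMulVec_of_rank_le_one h
  rw [vecMulVec_mul, vecMulVec_mul_vecMulVec, trace_vecMulVec, dotProduct_comm, vecMulVec_smul]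

/-- The `K`-projections, over an arbitrary field and with arbitrary finite index types. -/
structure IsKProjection (K : Matrix n m F) (X : Matrix m n F) : Prop where
  mul_mul_self : X * K * X = X

/-- The rank-one `K`-projections: the set `S`, over an arbitrary field. -/
structure IsRankOneKProjection (K : Matrix n m F) (X : Matrix m n F) : Prop
    extends IsKProjection K X where
  rank_eq_one : X.rank = 1

/-- The scalar multiple of `Y` whose product with `K` has trace one; it is `0` when
`tr (Y * K) = 0`. -/
def traceNormalize (K : Matrix n m F) (Y : Matrix m n F) : Matrix m n F :=
  (Y * K).trace⁻¹ • Y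

theorem traceNormalize_transpose (K : Matrix n m F) (Y : Matrix m n F) :
    traceNormalize Kᵀ Yᵀ = (traceNormalize K Y)ᵀ := by
  rw [traceNormalize, traceNormalize, transpose_smul, ← transpose_mul, trace_transpose,
    trace_mul_comm]

theorem eq_traceNormalize_of_eq_smul {K : Matrix n m F} {X Y : Matrix m n F} {c : F}
    (htr : (X * K).trace = 1) (hXY : X = c • Y) : X = traceNormalize K Y := by
  rw [hXY, Matrix.smul_mul, trace_smul, smul_eq_mul] at htr
  rw [traceNormalize, ← eq_inv_of_mul_eq_one_left htr, hXY]

namespace IsKProjection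

variable {K : Matrix n m F} {X : Matrix m n F}

theorem isIdempotentElem_mul_right (hX : IsKProjection K X) : IsIdempotentElem (X * K) := by
  rw [IsIdempotentElem, ← Matrix.mul_assoc, hX.mul_mul_self]

theorem isIdempotentElem_mul_left (hX : IsKProjection K X) : IsIdempotentElem (K * X) := by
  rw [IsIdempotentElem, Matrix.mul_assoc, ← Matrix.mul_assoc X, hX.mul_mul_self]

theorem transpose (hX : IsKProjection K X) : IsKProjection Kᵀ Xᵀ where
  mul_mul_self := by
    rw [← transpose_mul, ← transpose_mul, ← Matrix.mul_assoc, hX.mul_mul_self]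

end IsKProjection

namespace IsRankOneKProjection

variable {K : Matrix n m F} {X : Matrix m n F}

theorem transpose (hX : IsRankOneKProjection K X) : IsRankOneKProjection Kᵀ Xᵀ where
  toIsKProjection := hX.toIsKProjection.transpose
  rank_eq_one := by rw [rank_transpose, hX.rank_eq_one]

theorem trace_mul_eq_one (hX : IsRankOneKProjection K X) : (X * K).trace = 1 := by
  have hX0 : X ≠ 0 := by
    rintro rfl
    simpa only [rank_zero, zero_ne_one] using hX.rank_eq_one
  refine smul_left_injective F hX0 ?_
  simp only [one_smul, ← mul_mul_self_of_rank_le_one hX.rank_eq_one.le, hX.mul_mul_self]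

theorem eq_traceNormalize_of_factorizations (hX : IsRankOneKProjection K X) {Y : Matrix m n F}
    (hY : Y.rank ≤ 1) {L Z : Matrix m m F} {R W : Matrix n n F}
    (hL : X = L * Y * W) (hR : X = Z * Y * R) :
    X = traceNormalize K (L * Y * R) := by
  refine eq_traceNormalize_of_eq_smul hX.trace_mul_eq_one (c := (Y * (W * K * Z)).trace) ?_
  calc
    X = X * K * X := hX.mul_mul_self.symm
    _ = L * Y * W * K * (Z * Y * R) := by rw [← hL, ← hR]
    _ = L * (Y * (W * K * Z) * Y) * R := by simp only [Matrix.mul_assoc]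
    _ = (Y * (W * K * Z)).trace • (L * Y * R) := by
      rw [mul_mul_self_of_rank_le_one hY, Matrix.mul_smul, Matrix.smul_mul]

end IsRankOneKProjection

end RankOne

section Refactorization

variable {F m n : Type*} [Field F] [Fintype m] [Fintype n]
  {K : Matrix n m F} {p1 q1 p2 q2 : F} {X1 X2 X1' X2' : Matrix m n F}

theorem laxFactor_transpose [DecidableEq m] (p q l : F) (P : Matrix m m F) :
    laxFactor p q l Pᵀ = (laxFactor p q l P)ᵀ := by
  rw [laxFactor, laxFactor, transpose_sub, transpose_one, transpose_smul]

theorem Refactorizes.transpose [DecidableEq m] {P1 P2 Q1 Q2 : Matrix m m F}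
    (h : Refactorizes p1 q1 p2 q2 P1 P2 Q1 Q2) :
    Refactorizes q2 p2 q1 p1 P2ᵀ P1ᵀ Q2ᵀ Q1ᵀ := fun l hq hp => by
  simp only [laxFactor_transpose, ← transpose_mul, h l hp hq]

theorem exists_left_factorization [DecidableEq m] (hp1q1 : p1 ≠ q1) (hp1p2 : p1 ≠ p2)
    (hp1q2 : p1 ≠ q2) (hX2 : IsKProjection K X2) (hX1' : IsKProjection K X1')
    (h : Refactorizes p1 q1 p2 q2 (X1 * K) (X2 * K) (X1' * K) (X2' * K)) :
    ∃ W : Matrix n n F, X1' = laxFactor p2 q2 p1 (X2 * K) * X1 * W := by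
  set A := laxFactor p2 q2 p1 (X2 * K)
  set B := laxFactor q2 p2 p1 (X2 * K)
  have hAB : A * B = 1 :=
    laxFactor_mul_laxFactor_swap hX2.isIdempotentElem_mul_right hp1p2 hp1q2
  have annihilated : (1 - X1 * K) * (B * X1') = 0 := by
    have hp1 := h p1 hp1p2 hp1q1
    rw [laxFactor_self hp1q1, laxFactor_self hp1q1] at hp1
    rw [← Matrix.mul_assoc, hp1, Matrix.mul_assoc, Matrix.sub_mul, Matrix.one_mul,
      hX1'.mul_mul_self, sub_self, Matrix.mul_zero]
  have fixed : B * X1' = X1 * K * (B * X1') := by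
    rwa [Matrix.sub_mul, Matrix.one_mul, sub_eq_zero] at annihilated
  refine ⟨K * B * X1', ?_⟩
  calc
    X1' = A * (B * X1') := by rw [← Matrix.mul_assoc, hAB, Matrix.one_mul]
    _ = A * (X1 * K * (B * X1')) := by rw [← fixed]
    _ = A * X1 * (K * B * X1') := by simp only [Matrix.mul_assoc]

theorem exists_right_factorization [DecidableEq n] (hdist : [p1, q1, p2, q2].Nodup)
    (hX1' : IsKProjection K X1') (hX2' : IsKProjection K X2')
    (h : Refactorizes p1 q1 p2 q2 (K * X1) (K * X2) (K * X1') (K * X2')) :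
    ∃ Z : Matrix m m F, X1' = Z * X1 * laxFactor q2 p2 q1 (K * X2) := by
  have ⟨hq1p2, hq1q2⟩ : q1 ≠ p2 ∧ q1 ≠ q2 := by
    simp only [List.nodup_cons, List.mem_cons, not_or] at hdist
    tauto
  set A' := laxFactor p2 q2 q1 (K * X2')
  set B' := laxFactor q2 p2 q1 (K * X2')
  have hAB' : A' * B' = 1 :=
    laxFactor_mul_laxFactor_swap hX2'.isIdempotentElem_mul_left hq1p2 hq1q2
  refine ⟨X1' * A' * K, ?_⟩
  calc
    X1' = X1' * (A' * B') * (K * X1') := by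
      rw [hAB', Matrix.mul_one, ← Matrix.mul_assoc, hX1'.mul_mul_self]
    _ = X1' * A' * (B' * (K * X1')) := by simp only [Matrix.mul_assoc]
    _ = X1' * A' * (K * X1 * laxFactor q2 p2 q1 (K * X2)) := by rw [h.residue_eq hdist]
    _ = X1' * A' * K * X1 * laxFactor q2 p2 q1 (K * X2) := by simp only [Matrix.mul_assoc]

variable [DecidableEq m] [DecidableEq n]

theorem eq_traceNormalize_of_refactorizes (hdist : [p1, q1, p2, q2].Nodup)
    (hX1 : X1.rank ≤ 1) (hX2 : IsKProjection K X2)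
    (hX1' : IsRankOneKProjection K X1') (hX2' : IsKProjection K X2')
    (hleft : Refactorizes p1 q1 p2 q2 (X1 * K) (X2 * K) (X1' * K) (X2' * K))
    (hright : Refactorizes p1 q1 p2 q2 (K * X1) (K * X2) (K * X1') (K * X2')) :
    X1' = traceNormalize K
      (laxFactor p2 q2 p1 (X2 * K) * X1 * laxFactor q2 p2 q1 (K * X2)) := by
  have ⟨hp1q1, hp1p2, hp1q2⟩ : p1 ≠ q1 ∧ p1 ≠ p2 ∧ p1 ≠ q2 := by
    simp only [List.nodup_cons, List.mem_cons, not_or] at hdist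
    tauto
  obtain ⟨W, hW⟩ :=
    exists_left_factorization hp1q1 hp1p2 hp1q2 hX2 hX1'.toIsKProjection hleft
  obtain ⟨Z, hZ⟩ := exists_right_factorization hdist hX1'.toIsKProjection hX2' hright
  exact hX1'.eq_traceNormalize_of_factorizations hX1 hW hZ

theorem lax_representation_determines_T_general (hdist : [p1, q1, p2, q2].Nodup)
    (hX1 : IsRankOneKProjection K X1) (hX2 : IsRankOneKProjection K X2)
    (hX1' : IsRankOneKProjection K X1') (hX2' : IsRankOneKProjection K X2')
    (hleft : Refactorizes p1 q1 p2 q2 (X1 * K) (X2 * K) (X1' * K) (X2' * K))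
    (hright : Refactorizes p1 q1 p2 q2 (K * X1) (K * X2) (K * X1') (K * X2')) :
    X1' = traceNormalize K
        (laxFactor p2 q2 p1 (X2 * K) * X1 * laxFactor q2 p2 q1 (K * X2)) ∧
      X2' = traceNormalize K
        (laxFactor p1 q1 p2 (X1 * K) * X2 * laxFactor q1 p1 q2 (K * X1)) := by
  refine ⟨eq_traceNormalize_of_refactorizes hdist hX1.rank_eq_one.le hX2.toIsKProjection hX1'
    hX2'.toIsKProjection hleft hright, transpose_injective ?_⟩
  have hdist' : [q2, p2, q1, p1].Nodup := List.nodup_reverse.2 hdist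
  have hleft' := hright.transpose
  have hright' := hleft.transpose
  simp only [transpose_mul] at hleft' hright'
  have hX2'T := eq_traceNormalize_of_refactorizes hdist' hX2.transpose.rank_eq_one.le
    hX1.toIsKProjection.transpose hX2'.transpose hX1'.toIsKProjection.transpose hleft' hright'
  simpa only [← transpose_mul, laxFactor_transpose, traceNormalize_transpose, Matrix.mul_assoc]
    using hX2'T

end Refactorization

section Real

variable {m n : ℕ} {K : Matrix (Fin n) (Fin m) ℝ} {X : Mat m n}

theorem InS.isRankOneKProjection (h : InS K X) : IsRankOneKProjection K X where
  mul_mul_self := h.1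
  rank_eq_one := h.2

theorem Bmat_eq_laxFactor (p q l : ℝ) : Bmat K p q l X = laxFactor q p l (X * K) :=
  (laxFactor_swap p q l (X * K)).symm

theorem Btil_eq_laxFactor (p q l : ℝ) : Btil K p q l X = laxFactor q p l (K * X) :=
  (laxFactor_swap p q l (K * X)).symm

end Real

/-- the refactorization equations with `A₁` and `B₂` determine the map `T`. -/
theorem lax_representation_determines_T
    (m n : ℕ) (hm : 0 < m) (hn : 0 < n)
    (K : Matrix (Fin n) (Fin m) ℝ) (hK : K.rank = min n m)
    (p1 q1 p2 q2 : ℝ)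
    (hdist : List.Pairwise (· ≠ ·) [p1, q1, p2, q2])
    (X1 X2 X1' X2' : Mat m n)
    (hX1 : InS K X1) (hX2 : InS K X2) (hX1' : InS K X1') (hX2' : InS K X2')
    (hd1 : Tden1 K p1 q1 p2 q2 X1 X2 ≠ 0)
    (hd2 : Tden2 K p1 q1 p2 q2 X1 X2 ≠ 0)
    (hLax : ∀ lam : ℝ, lam ≠ p2 → lam ≠ q1 →
      Amat K p1 q1 lam X1 * Bmat K p2 q2 lam X2
        = Bmat K p2 q2 lam X2' * Amat K p1 q1 lam X1' ∧
      Atil K p1 q1 lam X1 * Btil K p2 q2 lam X2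
        = Btil K p2 q2 lam X2' * Atil K p1 q1 lam X1') :
    (X1', X2') = Tmap K p1 q1 p2 q2 (X1, X2) := by
  simp only [Bmat_eq_laxFactor, Btil_eq_laxFactor] at hLax
  obtain ⟨hfst, hsnd⟩ := lax_representation_determines_T_general hdist hX1.isRankOneKProjection
    hX2.isRankOneKProjection hX1'.isRankOneKProjection hX2'.isRankOneKProjection
    (fun l hp hq => (hLax l hp hq).1) (fun l hp hq => (hLax l hp hq).2)
  simp only [Tmap, Tden1, Tden2, Btil_eq_laxFactor]
  exact Prod.ext hfst hsnd
end

section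
/- Let p1, p2, p3, q1, q2, q3 be reals with p1, p2, p3 pairwise distinct, q1, q2, q3 pairwise distinct, and p_i ≠ q_j for all i, j, and let X1, X2, X3 ∈ S. Assume all trace denominators and α-factors occurring in the compositions below are nonzero. Then T_{23}(2,3) ∘ T_{13}(1,3) ∘ R_{12}(1,2) = R_{12}(1,2) ∘ T_{13}(1,3) ∘ T_{23}(2,3) as maps on the triple (X1,X2,X3), where the subscripts indicate on which two components of the triple the maps R(p_i,q_i;p_j,q_j) and T(p_i,q_i;p_j,q_j) act. -/
open Matrix

/-!
`B(p, q)` and `B̃(p, q)` are `A(q, p)` and `Ã(q, p)`, so on `S` the map `R(p₁, q₁; p₂, q₂)` is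
`T(p₁, q₁; q₂, p₂)`, and only `T` has to be understood. Each component of `T` is a normalized
two-sided multiplication `X ↦ L X R / tr(L X R K)`, and these compose by multiplying the left and
the right factors. If `(Y₁, Y₂) = T(X₁, X₂)`, the rational functions `A₁(λ, Y₁) A₂(λ, X₂)` and
`A₂(λ, Y₂) A₁(λ, X₁)` agree, since they agree at infinity and have the same residues at the two
poles `λ = q₁, q₂`. In each component of the mixed equation both sides are a twofold dressing of
the same `Xᵢ`, and this factorization identity, evaluated at the parameters of that component,
shows that the dressing factors coincide. For the second component, `R` has to be rewritten so that
`X₂` is dressed by the new first component rather than by the old one.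
-/

theorem mul_eq_mul_of_left_inv_of_right_inv {M : Type*} [Monoid M] {a a' b c d d' : M}
    (h : a * b = c * d) (ha : a' * a = 1) (hd : d * d' = 1) : b * d' = a' * c :=
  calc b * d' = a' * (a * b) * d' := by rw [← mul_assoc, ha, one_mul]
    _ = a' * c * (d * d') := by rw [h]; simp only [mul_assoc]
    _ = a' * c := by rw [hd, mul_one]

theorem one_sub_smul_mul_one_sub_smul {R A : Type*} [CommRing R] [Ring A] [Algebra R A] {e : A}
    (he : IsIdempotentElem e) (a b : R) :
    (1 - a • e) * (1 - b • e) = 1 - (a + b - a * b) • e := by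
  rw [sub_mul, mul_sub, mul_sub, one_mul, one_mul, mul_one, smul_mul_smul_comm, he.eq]
  module

section RankOne

variable {ι κ 𝕜 : Type*} [Fintype κ] [Field 𝕜] {X : Matrix ι κ 𝕜}

theorem exists_eq_vecMulVec_of_rank_le_one_s13 [Finite ι] (hX : X.rank ≤ 1) :
    ∃ v w, X = vecMulVec v w := by
  classical
  obtain ⟨v, hv⟩ := finrank_le_one_iff.1 hX
  choose w hw using fun j ↦ hv ⟨X.mulVecLin (Pi.single j 1), LinearMap.mem_range_self _ _⟩
  refine ⟨v, w, ext fun i j ↦ ?_⟩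
  have hcol : w j * v.1 i = (X *ᵥ Pi.single j 1) i := congrFun (congrArg Subtype.val (hw j)) i
  rw [vecMulVec_apply, mul_comm, hcol, mulVec_single_one, col_apply]

theorem mul_mul_self_of_rank_le_one_s13 [Fintype ι] (hX : X.rank ≤ 1) (M : Matrix κ ι 𝕜) :
    X * M * X = (M * X).trace • X := by
  obtain ⟨v, w, rfl⟩ := exists_eq_vecMulVec_of_rank_le_one_s13 hX
  rw [vecMulVec_mul, vecMulVec_mul_vecMulVec, mul_vecMulVec, trace_vecMulVec, vecMulVec_smul,
    ← dotProduct_mulVec, dotProduct_comm]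

theorem eq_zero_of_rank_eq_zero [Finite ι] (hX : X.rank = 0) : X = 0 := by
  classical
  refine toLin'.injective (Eq.trans ?_ (map_zero toLin').symm)
  exact LinearMap.range_eq_bot.1 (Submodule.finrank_eq_zero.1 hX)

end RankOne

section Dressing

variable {ι κ 𝕜 : Type*} [Fintype ι] [Fintype κ] [Field 𝕜]

/-- The dressing of `X` by a left factor `L` and a right factor `R`, normalized so that its product
with `K` has trace one; it is `0` when `L X R K` has trace zero. -/
def dress (K : Matrix κ ι 𝕜) (L : Matrix ι ι 𝕜) (R : Matrix κ κ 𝕜) (X : Matrix ι κ 𝕜) :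
    Matrix ι κ 𝕜 :=
  (L * X * R * K).trace⁻¹ • (L * X * R)

variable {K : Matrix κ ι 𝕜} {L L' : Matrix ι ι 𝕜} {R R' : Matrix κ κ 𝕜} {X : Matrix ι κ 𝕜}

theorem dress_dress (h : (L' * X * R' * K).trace ≠ 0) :
    dress K L R (dress K L' R' X) = dress K (L * L') (R' * R) X := by
  simp only [dress, Matrix.mul_smul, Matrix.smul_mul, trace_smul, smul_eq_mul, smul_smul, mul_inv,
    inv_inv, Matrix.mul_assoc] at h ⊢
  congr 1
  field_simp

theorem trace_ne_zero_of_dress_ne_zero (h : dress K L R X ≠ 0) : (L * X * R * K).trace ≠ 0 := by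
  contrapose! h
  rw [dress, h, _root_.inv_zero, zero_smul]

theorem dress_eq_of_mul_mul_eq_smul {Y : Matrix ι κ 𝕜} {c : 𝕜} (hc : c ≠ 0)
    (hY : (Y * K).trace = 1) (h : L * X * R = c • Y) : dress K L R X = Y := by
  rw [dress, h, Matrix.smul_mul, trace_smul, hY, smul_eq_mul, mul_one, inv_smul_smul₀ hc]

theorem trace_dress_mul (h : (L * X * R * K).trace ≠ 0) : (dress K L R X * K).trace = 1 := by
  rw [dress, Matrix.smul_mul, trace_smul, smul_eq_mul, inv_mul_cancel₀ h]

theorem dress_dress_congr {M M' : Matrix ι ι 𝕜} {N N' : Matrix κ κ 𝕜}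
    (h : (L' * X * R' * K).trace ≠ 0) (h' : (M' * X * N' * K).trace ≠ 0)
    (hL : L * L' = M * M') (hR : R' * R = N' * N) :
    dress K L R (dress K L' R' X) = dress K M N (dress K M' N' X) := by
  rw [dress_dress h, dress_dress h', hL, hR]

end Dressing

namespace InS

variable {m n : ℕ} {K : Matrix (Fin n) (Fin m) ℝ} {X : Mat m n}

theorem mul_mul_self (h : InS K X) (M : Matrix (Fin n) (Fin m) ℝ) :
    X * M * X = (M * X).trace • X :=
  mul_mul_self_of_rank_le_one_s13 h.2.le M

theorem mul_mul_mul_mul_self (h : InS K X) (Y : Mat m n) :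
    X * K * Y * K * X = (K * Y * K * X).trace • X := by
  rw [← h.mul_mul_self (K * Y * K)]
  simp only [Matrix.mul_assoc]

theorem ne_zero (h : InS K X) : X ≠ 0 := by
  rintro rfl
  exact zero_ne_one (rank_zero.symm.trans h.2)

theorem trace_mul_eq_one (h : InS K X) : (X * K).trace = 1 := by
  refine smul_left_injective ℝ h.ne_zero ?_
  change (X * K).trace • X = (1 : ℝ) • X
  rw [trace_mul_comm, ← h.mul_mul_self, h.1, one_smul]

end InS

theorem inS_dress {m n : ℕ} {K : Matrix (Fin n) (Fin m) ℝ} {X : Mat m n}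
    {L : Matrix (Fin m) (Fin m) ℝ} {R : Matrix (Fin n) (Fin n) ℝ}
    (hX : X.rank ≤ 1) (hs : (L * X * R * K).trace ≠ 0) : InS K (dress K L R X) := by
  have htrace := trace_dress_mul hs
  have hrank : (dress K L R X).rank ≤ 1 := by
    rw [dress, ← Matrix.smul_mul, ← Matrix.smul_mul]
    exact (rank_mul_le_left _ _).trans ((rank_mul_le_right _ _).trans hX)
  have hrank_ne : (dress K L R X).rank ≠ 0 := by
    intro h0
    rw [eq_zero_of_rank_eq_zero h0, Matrix.zero_mul, trace_zero] at htrace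
    exact zero_ne_one htrace
  refine ⟨?_, by omega⟩
  rw [mul_mul_self_of_rank_le_one_s13 hrank, trace_mul_comm, htrace, one_smul]

section LaxFactors

variable {m n : ℕ} {K : Matrix (Fin n) (Fin m) ℝ} {X Y : Mat m n} {p q l : ℝ}

theorem swap_coeff_eq_zero (hp : l ≠ p) (hq : l ≠ q) :
    (p - q) / (l - q) + (q - p) / (l - p) - (p - q) / (l - q) * ((q - p) / (l - p)) = 0 := by
  have hp' := sub_ne_zero.2 hp
  have hq' := sub_ne_zero.2 hq
  field_simp
  ring

theorem Bmat_eq_Amat : Bmat K p q l X = Amat K q p l X := by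
  rw [Bmat, Amat, ← neg_sub q p, neg_div, neg_smul, ← sub_eq_add_neg]

theorem Btil_eq_Atil : Btil K p q l X = Atil K q p l X := by
  rw [Btil, Atil, ← neg_sub q p, neg_div, neg_smul, ← sub_eq_add_neg]

theorem Atil_mul_eq_mul_Amat : Atil K p q l X * K = K * Amat K p q l X := by
  simp only [Atil, Amat, Matrix.sub_mul, Matrix.mul_sub, Matrix.one_mul, Matrix.mul_one,
    Matrix.smul_mul, Matrix.mul_smul, Matrix.mul_assoc]

theorem Amat_mul_self (hX : X * K * X = X) (hq : l ≠ q) :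
    Amat K p q l X * X = ((l - p) / (l - q)) • X := by
  rw [Amat, Matrix.sub_mul, Matrix.one_mul, Matrix.smul_mul, hX,
    ← sub_sub_sub_cancel_right l p q, sub_div (l - q), div_self (sub_ne_zero.2 hq), sub_smul,
    one_smul]

theorem self_mul_Atil (hX : X * K * X = X) (hq : l ≠ q) :
    X * Atil K p q l X = ((l - p) / (l - q)) • X := by
  rw [Atil, Matrix.mul_sub, Matrix.mul_one, Matrix.mul_smul, ← Matrix.mul_assoc, hX,
    ← sub_sub_sub_cancel_right l p q, sub_div (l - q), div_self (sub_ne_zero.2 hq), sub_smul,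
    one_smul]

theorem Amat_mul_Amat_swap (hX : X * K * X = X) (hp : l ≠ p) (hq : l ≠ q) :
    Amat K p q l X * Amat K q p l X = 1 := by
  have hidem : IsIdempotentElem (X * K) := by
    rw [IsIdempotentElem, ← Matrix.mul_assoc, hX]
  rw [Amat, Amat, one_sub_smul_mul_one_sub_smul hidem, swap_coeff_eq_zero hp hq, zero_smul,
    sub_zero]

theorem Atil_mul_Atil_swap (hX : X * K * X = X) (hp : l ≠ p) (hq : l ≠ q) :
    Atil K p q l X * Atil K q p l X = 1 := by
  have hidem : IsIdempotentElem (K * X) := by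
    rw [IsIdempotentElem, Matrix.mul_assoc, ← Matrix.mul_assoc X, hX]
  rw [Atil, Atil, one_sub_smul_mul_one_sub_smul hidem, swap_coeff_eq_zero hp hq, zero_smul,
    sub_zero]

variable {p1 q1 p2 q2 : ℝ}

theorem partialFraction_coeff (h12 : q1 ≠ q2) (h1 : l ≠ q1) (h2 : l ≠ q2) :
    (p1 - q1) / (l - q1) * ((p2 - q2) / (l - q2)) =
      (p1 - q1) / (l - q1) * ((p2 - q2) / (q1 - q2)) +
        (p2 - q2) / (l - q2) * ((p1 - q1) / (q2 - q1)) := by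
  have h1' := sub_ne_zero.2 h1
  have h2' := sub_ne_zero.2 h2
  have h12' := sub_ne_zero.2 h12
  have h21' := sub_ne_zero.2 h12.symm
  field_simp
  ring

theorem Amat_mul_Amat_eq_one_sub (h12 : q1 ≠ q2) (h1 : l ≠ q1) (h2 : l ≠ q2) :
    Amat K p1 q1 l X * Amat K p2 q2 l Y =
      1 - (((p1 - q1) / (l - q1)) • (X * Atil K p2 q2 q1 Y) +
        ((p2 - q2) / (l - q2)) • (Amat K p1 q1 q2 X * Y)) * K := by
  simp only [Amat, Atil, Matrix.sub_mul, Matrix.mul_sub, Matrix.add_mul, Matrix.one_mul,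
    Matrix.mul_one, Matrix.smul_mul, Matrix.mul_smul, smul_sub, smul_smul, Matrix.mul_assoc]
  rw [mul_comm ((p2 - q2) / (l - q2)) ((p1 - q1) / (l - q1)), partialFraction_coeff h12 h1 h2]
  module

theorem Atil_mul_Atil_eq_one_sub (h12 : q1 ≠ q2) (h1 : l ≠ q1) (h2 : l ≠ q2) :
    Atil K p1 q1 l X * Atil K p2 q2 l Y =
      1 - K * (((p1 - q1) / (l - q1)) • (X * Atil K p2 q2 q1 Y) +
        ((p2 - q2) / (l - q2)) • (Amat K p1 q1 q2 X * Y)) := by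
  simp only [Amat, Atil, Matrix.sub_mul, Matrix.mul_sub, Matrix.mul_add, Matrix.one_mul,
    Matrix.mul_one, Matrix.smul_mul, Matrix.mul_smul, smul_sub, smul_smul, Matrix.mul_assoc]
  rw [mul_comm ((p2 - q2) / (l - q2)) ((p1 - q1) / (l - q1)), partialFraction_coeff h12 h1 h2]
  module

end LaxFactors

section Tdress

/-- The dressing of `X1` by `X2`: the first component of `T(p1,q1;p2,q2)(X1,X2)`. The second
component is `Tdress K p2 q2 p1 q1 X2 X1`. -/
noncomputable def Tdress {m n : ℕ} (K : Matrix (Fin n) (Fin m) ℝ) (p1 q1 p2 q2 : ℝ)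
    (X1 X2 : Mat m n) : Mat m n :=
  dress K (Amat K p2 q2 p1 X2) (Btil K p2 q2 q1 X2) X1

variable {m n : ℕ} {K : Matrix (Fin n) (Fin m) ℝ} {X1 X2 : Mat m n} {p1 q1 p2 q2 l : ℝ}

theorem Tmap_eq_Tdress : Tmap K p1 q1 p2 q2 (X1, X2) =
    (Tdress K p1 q1 p2 q2 X1 X2, Tdress K p2 q2 p1 q1 X2 X1) :=
  rfl

theorem inS_Tdress (hX1 : InS K X1) (hs : Tden1 K p1 q1 p2 q2 X1 X2 ≠ 0) :
    InS K (Tdress K p1 q1 p2 q2 X1 X2) :=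
  inS_dress hX1.2.le hs

theorem Tden1_eq_one_add_trace (hX1 : InS K X1) (hX2 : InS K X2) (hpq : p1 ≠ q2) (hqp : q1 ≠ p2) :
    Tden1 K p1 q1 p2 q2 X1 X2 =
      1 + (p1 - q1) * (p2 - q2) / ((p1 - q2) * (q1 - p2)) * (K * X1 * K * X2).trace := by
  have hcubic : X2 * K * X1 * K * X2 * K = (K * X1 * K * X2).trace • (X2 * K) := by
    rw [hX2.mul_mul_mul_mul_self, Matrix.smul_mul]
  have htrace : (X2 * K * X1 * K).trace = (K * X1 * K * X2).trace := by
    rw [Matrix.mul_assoc, Matrix.mul_assoc, trace_mul_comm, ← Matrix.mul_assoc]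
  have htrace' : (X1 * K * X2 * K).trace = (K * X1 * K * X2).trace := by
    rw [trace_mul_comm, ← Matrix.mul_assoc, ← Matrix.mul_assoc]
  have hpq' := sub_ne_zero.2 hpq
  have hqp' := sub_ne_zero.2 hqp
  simp only [Tden1, Amat, Btil, Matrix.sub_mul, Matrix.mul_add, Matrix.add_mul, Matrix.one_mul,
    Matrix.mul_one, Matrix.smul_mul, Matrix.mul_smul, ← Matrix.mul_assoc, hcubic, trace_add,
    trace_sub, trace_smul, htrace, htrace', hX1.trace_mul_eq_one, hX2.trace_mul_eq_one, smul_eq_mul]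
  field_simp
  ring

theorem Tden1_comm (hX1 : InS K X1) (hX2 : InS K X2) (hpq : p1 ≠ q2) (hqp : q1 ≠ p2) :
    Tden1 K p1 q1 p2 q2 X1 X2 = Tden1 K p2 q2 p1 q1 X2 X1 := by
  rw [Tden1_eq_one_add_trace hX1 hX2 hpq hqp, Tden1_eq_one_add_trace hX2 hX1 hqp.symm hpq.symm]
  have htrace : (K * X2 * K * X1).trace = (K * X1 * K * X2).trace := by
    rw [Matrix.mul_assoc, trace_mul_comm, ← Matrix.mul_assoc]
  rw [htrace, ← neg_sub p1 q2, ← neg_sub q1 p2]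
  ring

theorem adenom_eq_Tden1 (hX1 : InS K X1) (hX2 : InS K X2) (hp : p1 ≠ p2) (hq : q1 ≠ q2) :
    adenom K p1 q1 p2 q2 X1 X2 = Tden1 K p1 q1 q2 p2 X1 X2 := by
  rw [Tden1_eq_one_add_trace hX1 hX2 hp hq, adenom, ← neg_sub p1 p2, ← neg_sub q1 q2,
    ← neg_sub p2 q2]
  ring

theorem Rmap_eq_Tdress (hX1 : InS K X1) (hX2 : InS K X2) (hp : p1 ≠ p2) (hq : q1 ≠ q2) :
    Rmap K p1 q1 p2 q2 (X1, X2) =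
      (Tdress K p1 q1 q2 p2 X1 X2, Tdress K q2 p2 p1 q1 X2 X1) := by
  have hA : 1 - ((p2 - q2) / (p2 - p1)) • (X2 * K) = Amat K q2 p2 p1 X2 := by
    rw [Amat, ← neg_div_neg_eq, neg_sub, neg_sub]
  have hB : 1 - ((p2 - q2) / (q1 - q2)) • (K * X2) = Btil K q2 p2 q1 X2 := by
    rw [Btil_eq_Atil, Atil]
  have hB' : 1 - ((p1 - q1) / (p1 - p2)) • (K * X1) = Btil K p1 q1 p2 X1 := by
    rw [Btil_eq_Atil, Atil, ← neg_div_neg_eq, neg_sub, neg_sub]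
  refine Prod.ext ?_ ?_
  · rw [Rmap, hA, hB, adenom_eq_Tden1 hX1 hX2 hp hq]
    rfl
  · rw [Rmap, hB', adenom_eq_Tden1 hX1 hX2 hp hq, Tden1_comm hX1 hX2 hp hq]
    rfl

theorem Tdress_mul_mul (hX2 : InS K X2) (hqp : q1 ≠ p2) :
    Tdress K p1 q1 p2 q2 X1 X2 * K * X2 =
      ((Tden1 K p1 q1 p2 q2 X1 X2)⁻¹ * ((q1 - q2) / (q1 - p2))) •
        (X1 * K * X2 - ((p2 - q2) / (p1 - q2) * (K * X1 * K * X2).trace) • X2) :=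
  calc Tdress K p1 q1 p2 q2 X1 X2 * K * X2
      = (Tden1 K p1 q1 p2 q2 X1 X2)⁻¹ •
          (Amat K p2 q2 p1 X2 * X1 * (Atil K q2 p2 q1 X2 * K) * X2) := by
        rw [Tdress, dress, ← Tden1, Btil_eq_Atil]
        simp only [Matrix.smul_mul, Matrix.mul_assoc]
    _ = ((Tden1 K p1 q1 p2 q2 X1 X2)⁻¹ * ((q1 - q2) / (q1 - p2))) •
          (Amat K p2 q2 p1 X2 * X1 * K * X2) := by
        rw [Atil_mul_eq_mul_Amat, ← Matrix.mul_assoc, Matrix.mul_assoc _ _ X2,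
          Amat_mul_self hX2.1 hqp, Matrix.mul_smul, smul_smul]
    _ = _ := by
        rw [Amat, ← smul_smul ((p2 - q2) / (p1 - q2)), ← hX2.mul_mul_mul_mul_self]
        simp only [Matrix.sub_mul, Matrix.one_mul, Matrix.smul_mul]

theorem mul_mul_Tdress (hX2 : InS K X2) (hpq : p1 ≠ q2) :
    X2 * K * Tdress K p1 q1 p2 q2 X1 X2 =
      ((Tden1 K p1 q1 p2 q2 X1 X2)⁻¹ * ((p1 - p2) / (p1 - q2))) •
        (X2 * K * X1 + ((p2 - q2) / (q1 - p2) * (K * X1 * K * X2).trace) • X2) :=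
  calc X2 * K * Tdress K p1 q1 p2 q2 X1 X2
      = (Tden1 K p1 q1 p2 q2 X1 X2)⁻¹ •
          (X2 * (K * Amat K p2 q2 p1 X2) * X1 * Btil K p2 q2 q1 X2) := by
        rw [Tdress, dress, ← Tden1]
        simp only [Matrix.mul_smul, Matrix.mul_assoc]
    _ = ((Tden1 K p1 q1 p2 q2 X1 X2)⁻¹ * ((p1 - p2) / (p1 - q2))) •
          (X2 * K * X1 * Btil K p2 q2 q1 X2) := by
        rw [← Atil_mul_eq_mul_Amat, ← Matrix.mul_assoc, self_mul_Atil hX2.1 hpq]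
        simp only [Matrix.smul_mul, smul_smul]
    _ = _ := by
        rw [Btil, ← smul_smul ((p2 - q2) / (q1 - p2)), ← hX2.mul_mul_mul_mul_self]
        simp only [Matrix.mul_add, Matrix.mul_one, Matrix.mul_smul, Matrix.mul_assoc]

theorem Amat_Tdress_mul (hX1 : InS K X1) (hX2 : InS K X2)
    (hs : Tden1 K p1 q1 p2 q2 X1 X2 ≠ 0) (hpq : p1 ≠ q2) (hqp : q1 ≠ p2) (hq : q1 ≠ q2) :
    Amat K p1 q1 q2 (Tdress K p1 q1 p2 q2 X1 X2) * X2 =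
      (Tden1 K p1 q1 p2 q2 X1 X2)⁻¹ • (Amat K p1 q1 p2 X1 * X2) := by
  have hs_eq := Tden1_eq_one_add_trace hX1 hX2 hpq hqp
  have hpq' := sub_ne_zero.2 hpq
  have hqp' := sub_ne_zero.2 hqp
  have hpq'' := sub_ne_zero.2 hqp.symm
  have hq' := sub_ne_zero.2 hq.symm
  simp only [Amat, Matrix.sub_mul, Matrix.one_mul, Matrix.smul_mul, Tdress_mul_mul hX2 hqp]
  match_scalars
  · field_simp
    rw [hs_eq]
    field_simp
    ring
  · field_simp
    ring

theorem mul_Atil_Tdress (hX1 : InS K X1) (hX2 : InS K X2)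
    (hs : Tden1 K p1 q1 p2 q2 X1 X2 ≠ 0) (hpq : p1 ≠ q2) (hqp : q1 ≠ p2) (hp : p1 ≠ p2) :
    X2 * Atil K q1 p1 p2 (Tdress K p1 q1 p2 q2 X1 X2) =
      (Tden1 K p1 q1 p2 q2 X1 X2)⁻¹ • (X2 * Atil K q1 p1 q2 X1) := by
  have hs_eq := Tden1_eq_one_add_trace hX1 hX2 hpq hqp
  have hpq' := sub_ne_zero.2 hpq
  have hqp' := sub_ne_zero.2 hqp
  have hpq'' := sub_ne_zero.2 hpq.symm
  have hp' := sub_ne_zero.2 hp.symm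
  simp only [Atil, Matrix.mul_sub, Matrix.mul_one, Matrix.mul_smul, ← Matrix.mul_assoc,
    mul_mul_Tdress hX2 hpq]
  match_scalars
  · field_simp
    rw [hs_eq]
    field_simp
    ring
  · field_simp
    ring

theorem Tdress_eq_smul (hX1 : InS K X1) (hX2 : InS K X2) (hpq : p1 ≠ q2) (hqp : q1 ≠ p2) :
    Tdress K p2 q2 p1 q1 X2 X1 =
      (Tden1 K p1 q1 p2 q2 X1 X2)⁻¹ • (Amat K p1 q1 p2 X1 * X2 * Atil K q1 p1 q2 X1) := by
  rw [Tden1_comm hX1 hX2 hpq hqp, Tdress, Btil_eq_Atil, dress, ← Btil_eq_Atil, ← Tden1]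

theorem Amat_Tdress_mul_eq_Tdress_mul_Atil (hX1 : InS K X1) (hX2 : InS K X2)
    (hs : Tden1 K p1 q1 p2 q2 X1 X2 ≠ 0) (hpq : p1 ≠ q2) (hqp : q1 ≠ p2) (hq : q1 ≠ q2) :
    Amat K p1 q1 q2 (Tdress K p1 q1 p2 q2 X1 X2) * X2 =
      Tdress K p2 q2 p1 q1 X2 X1 * Atil K p1 q1 q2 X1 := by
  rw [Amat_Tdress_mul hX1 hX2 hs hpq hqp hq, Tdress_eq_smul hX1 hX2 hpq hqp, Matrix.smul_mul,
    Matrix.mul_assoc, Atil_mul_Atil_swap hX1.1 hq.symm hpq.symm, Matrix.mul_one]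

theorem Amat_mul_Amat_Tdress (hX1 : InS K X1) (hX2 : InS K X2)
    (hs : Tden1 K p1 q1 p2 q2 X1 X2 ≠ 0) (hpq : p1 ≠ q2) (hqp : q1 ≠ p2) (hq : q1 ≠ q2)
    (h1 : l ≠ q1) (h2 : l ≠ q2) :
    Amat K p1 q1 l (Tdress K p1 q1 p2 q2 X1 X2) * Amat K p2 q2 l X2 =
      Amat K p2 q2 l (Tdress K p2 q2 p1 q1 X2 X1) * Amat K p1 q1 l X1 := by
  rw [Amat_mul_Amat_eq_one_sub hq h1 h2, Amat_mul_Amat_eq_one_sub hq.symm h2 h1,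
    Amat_Tdress_mul_eq_Tdress_mul_Atil hX1 hX2 hs hpq hqp hq,
    Amat_Tdress_mul_eq_Tdress_mul_Atil hX2 hX1 (Tden1_comm hX1 hX2 hpq hqp ▸ hs) hqp.symm
      hpq.symm hq.symm, add_comm]

theorem Atil_mul_Atil_Tdress (hX1 : InS K X1) (hX2 : InS K X2)
    (hs : Tden1 K p1 q1 p2 q2 X1 X2 ≠ 0) (hpq : p1 ≠ q2) (hqp : q1 ≠ p2) (hq : q1 ≠ q2)
    (h1 : l ≠ q1) (h2 : l ≠ q2) :
    Atil K p1 q1 l (Tdress K p1 q1 p2 q2 X1 X2) * Atil K p2 q2 l X2 =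
      Atil K p2 q2 l (Tdress K p2 q2 p1 q1 X2 X1) * Atil K p1 q1 l X1 := by
  rw [Atil_mul_Atil_eq_one_sub hq h1 h2, Atil_mul_Atil_eq_one_sub hq.symm h2 h1,
    Amat_Tdress_mul_eq_Tdress_mul_Atil hX1 hX2 hs hpq hqp hq,
    Amat_Tdress_mul_eq_Tdress_mul_Atil hX2 hX1 (Tden1_comm hX1 hX2 hpq hqp ▸ hs) hqp.symm
      hpq.symm hq.symm, add_comm]

theorem Tdress_eq_Tdress_Tdress (hX1 : InS K X1) (hX2 : InS K X2)
    (hs : Tden1 K p1 q1 p2 q2 X1 X2 ≠ 0) (hpq : p1 ≠ q2) (hqp : q1 ≠ p2)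
    (hp : p1 ≠ p2) (hq : q1 ≠ q2) :
    Tdress K p2 q2 p1 q1 X2 X1 =
      Tdress K q2 p2 p1 q1 X2 (Tdress K p1 q1 p2 q2 X1 X2) := by
  set s := Tden1 K p1 q1 p2 q2 X1 X2
  set Y1 := Tdress K p1 q1 p2 q2 X1 X2
  have hs' : Tden1 K p2 q2 p1 q1 X2 X1 ≠ 0 := Tden1_comm hX1 hX2 hpq hqp ▸ hs
  refine (dress_eq_of_mul_mul_eq_smul (inv_ne_zero hs) (trace_dress_mul hs') ?_).symm
  calc Amat K p1 q1 q2 Y1 * X2 * Btil K p1 q1 p2 Y1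
      = s⁻¹ • (Amat K p1 q1 p2 X1 * (X2 * Atil K q1 p1 p2 Y1)) := by
        rw [Amat_Tdress_mul hX1 hX2 hs hpq hqp hq, Btil_eq_Atil, Matrix.smul_mul,
          Matrix.mul_assoc]
    _ = s⁻¹ • s⁻¹ • (Amat K p1 q1 p2 X1 * X2 * Atil K q1 p1 q2 X1) := by
        rw [mul_Atil_Tdress hX1 hX2 hs hpq hqp hp, Matrix.mul_smul, Matrix.mul_assoc]
    _ = s⁻¹ • Tdress K p2 q2 p1 q1 X2 X1 := by
        rw [Tdress_eq_smul hX1 hX2 hpq hqp]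

end Tdress

section MixedYangBaxter

variable {m n : ℕ} {K : Matrix (Fin n) (Fin m) ℝ} {X1 X2 X3 : Mat m n} {p1 q1 p2 q2 p3 q3 : ℝ}

theorem mixed_YangBaxter_fst (hX2 : InS K X2) (hX3 : InS K X3)
    (hp12 : p1 ≠ p2) (hq12 : q1 ≠ q2) (hq13 : q1 ≠ q3) (hq23 : q2 ≠ q3)
    (hp1q2 : p1 ≠ q2) (hp1q3 : p1 ≠ q3) (hp2q3 : p2 ≠ q3) (hp3q1 : p3 ≠ q1) (hp3q2 : p3 ≠ q2)
    (h12 : Tden1 K p1 q1 q2 p2 X1 X2 ≠ 0) (h23 : Tden1 K p2 q2 p3 q3 X2 X3 ≠ 0)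
    (h13 : Tden1 K p1 q1 p3 q3 X1 (Tdress K p3 q3 p2 q2 X3 X2) ≠ 0) :
    Tdress K p1 q1 p3 q3 (Tdress K p1 q1 q2 p2 X1 X2) X3 =
      Tdress K p1 q1 q2 p2 (Tdress K p1 q1 p3 q3 X1 (Tdress K p3 q3 p2 q2 X3 X2))
        (Tdress K p2 q2 p3 q3 X2 X3) := by
  have h32 : Tden1 K p3 q3 p2 q2 X3 X2 ≠ 0 := Tden1_comm hX2 hX3 hp2q3 hp3q2.symm ▸ h23
  have hW2 := inS_Tdress hX2 h23
  have hW3 := inS_Tdress hX3 h32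
  refine dress_dress_congr h12 h13 ?_ ?_
  · exact mul_eq_mul_of_left_inv_of_right_inv
      (Amat_mul_Amat_Tdress hX2 hX3 h23 hp2q3 hp3q2.symm hq23 hp1q2 hp1q3)
      (Amat_mul_Amat_swap hW2.1 hp1q2 hp12) (Amat_mul_Amat_swap hX2.1 hp12 hp1q2)
  · simp only [Btil_eq_Atil]
    exact mul_eq_mul_of_left_inv_of_right_inv
      (Atil_mul_Atil_Tdress hX2 hX3 h23 hp2q3 hp3q2.symm hq23 hq12 hq13).symm
      (Atil_mul_Atil_swap hW3.1 hq13 hp3q1.symm) (Atil_mul_Atil_swap hX3.1 hp3q1.symm hq13)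

theorem mixed_YangBaxter_snd (hX1 : InS K X1) (hX3 : InS K X3)
    (hq12 : q1 ≠ q2) (hq13 : q1 ≠ q3) (hq23 : q2 ≠ q3) (hp1q2 : p1 ≠ q2) (hp1q3 : p1 ≠ q3)
    (hp2q1 : p2 ≠ q1) (hp2q3 : p2 ≠ q3) (hp3q1 : p3 ≠ q1) (hp3q2 : p3 ≠ q2)
    (h21 : Tden1 K p2 q2 p1 q1 X2 X1 ≠ 0) (h23 : Tden1 K p2 q2 p3 q3 X2 X3 ≠ 0)
    (h13 : Tden1 K p1 q1 p3 q3 X1 X3 ≠ 0) :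
    Tdress K p2 q2 p3 q3 (Tdress K p2 q2 p1 q1 X2 X1) (Tdress K p3 q3 p1 q1 X3 X1) =
      Tdress K p2 q2 p1 q1 (Tdress K p2 q2 p3 q3 X2 X3) (Tdress K p1 q1 p3 q3 X1 X3) := by
  have h31 : Tden1 K p3 q3 p1 q1 X3 X1 ≠ 0 := Tden1_comm hX1 hX3 hp1q3 hp3q1.symm ▸ h13
  have hZ1 := inS_Tdress hX1 h13
  have hZ3 := inS_Tdress hX3 h31
  refine dress_dress_congr h21 h23 ?_ ?_
  · exact (Amat_mul_Amat_Tdress hX1 hX3 h13 hp1q3 hp3q1.symm hq13 hp2q1 hp2q3).symm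
  · simp only [Btil_eq_Atil]
    have hZ3_left := mul_eq_mul_of_left_inv_of_right_inv
      (Atil_mul_Atil_Tdress hX1 hX3 h13 hp1q3 hp3q1.symm hq13 hq12.symm hq23).symm
      (Atil_mul_Atil_swap hZ3.1 hq23 hp3q2.symm) (Atil_mul_Atil_swap hX3.1 hp3q2.symm hq23)
    exact (mul_eq_mul_of_left_inv_of_right_inv hZ3_left
      (Atil_mul_Atil_swap hX1.1 hq12.symm hp1q2.symm)
      (Atil_mul_Atil_swap hZ1.1 hp1q2.symm hq12.symm)).symm

theorem mixed_YangBaxter_thd (hX1 : InS K X1) (hX2 : InS K X2)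
    (hp12 : p1 ≠ p2) (hp23 : p2 ≠ p3) (hq12 : q1 ≠ q2) (hq13 : q1 ≠ q3)
    (hp1q3 : p1 ≠ q3) (hp2q1 : p2 ≠ q1) (hp2q3 : p2 ≠ q3) (hp3q1 : p3 ≠ q1) (hp3q2 : p3 ≠ q2)
    (h12 : Tden1 K p1 q1 q2 p2 X1 X2 ≠ 0) (h32 : Tden1 K p3 q3 p2 q2 X3 X2 ≠ 0)
    (h31 : Tden1 K p3 q3 p1 q1 X3 (Tdress K p1 q1 q2 p2 X1 X2) ≠ 0) :
    Tdress K p3 q3 p2 q2 (Tdress K p3 q3 p1 q1 X3 (Tdress K p1 q1 q2 p2 X1 X2))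
        (Tdress K q2 p2 p1 q1 X2 X1) =
      Tdress K p3 q3 p1 q1 (Tdress K p3 q3 p2 q2 X3 X2) X1 := by
  have h21 : Tden1 K q2 p2 p1 q1 X2 X1 ≠ 0 := Tden1_comm hX1 hX2 hp12 hq12 ▸ h12
  have hY1 := inS_Tdress hX1 h12
  have hY2 := inS_Tdress hX2 h21
  refine dress_dress_congr h31 h32 ?_ ?_
  · exact (mul_eq_mul_of_left_inv_of_right_inv
      (Amat_mul_Amat_Tdress hX1 hX2 h12 hp12 hq12 hp2q1.symm hp3q1 hp23.symm).symm
      (Amat_mul_Amat_swap hY2.1 hp23.symm hp3q2) (Amat_mul_Amat_swap hX2.1 hp3q2 hp23.symm)).symm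
  · simp only [Btil_eq_Atil]
    exact (mul_eq_mul_of_left_inv_of_right_inv
      (Atil_mul_Atil_Tdress hX1 hX2 h12 hp12 hq12 hp2q1.symm hq13.symm hp2q3.symm)
      (Atil_mul_Atil_swap hY1.1 hq13.symm hp1q3.symm)
      (Atil_mul_Atil_swap hX1.1 hp1q3.symm hq13.symm)).symm

theorem mixed_YangBaxter_T_T_R_general
    (hp12 : p1 ≠ p2) (hp23 : p2 ≠ p3) (hq12 : q1 ≠ q2) (hq13 : q1 ≠ q3) (hq23 : q2 ≠ q3)
    (hp1q2 : p1 ≠ q2) (hp1q3 : p1 ≠ q3) (hp2q1 : p2 ≠ q1) (hp2q3 : p2 ≠ q3)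
    (hp3q1 : p3 ≠ q1) (hp3q2 : p3 ≠ q2) (hX1 : InS K X1) (hX2 : InS K X2) (hX3 : InS K X3)
    (hR12 : adenom K p1 q1 p2 q2 X1 X2 ≠ 0)
    (hT13 : Tden1 K p1 q1 p3 q3 (Rmap K p1 q1 p2 q2 (X1, X2)).1 X3 ≠ 0)
    (hT23 : Tden1 K p2 q2 p3 q3 X2 X3 ≠ 0)
    (hT13' : Tden1 K p1 q1 p3 q3 X1 (Tmap K p2 q2 p3 q3 (X2, X3)).2 ≠ 0) :
    T23t K p2 q2 p3 q3 (T13t K p1 q1 p3 q3 (R12t K p1 q1 p2 q2 (X1, X2, X3))) =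
      R12t K p1 q1 p2 q2 (T13t K p1 q1 p3 q3 (T23t K p2 q2 p3 q3 (X1, X2, X3))) := by
  rw [adenom_eq_Tden1 hX1 hX2 hp12 hq12] at hR12
  rw [Rmap_eq_Tdress hX1 hX2 hp12 hq12] at hT13
  rw [Tmap_eq_Tdress] at hT13'
  have hY1 := inS_Tdress hX1 hR12
  have hZ1 := inS_Tdress hY1 hT13
  have hV1 := inS_Tdress hX1 hT13'
  have hW2 := inS_Tdress hX2 hT23
  have hfst := mixed_YangBaxter_fst hX2 hX3 hp12 hq12 hq13 hq23 hp1q2 hp1q3 hp2q3 hp3q1 hp3q2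
    hR12 hT23 hT13'
  have hR12' := trace_ne_zero_of_dress_ne_zero (hfst ▸ hZ1.ne_zero)
  have hY2 := Tdress_eq_Tdress_Tdress hX1 hX2 hR12 hp12 hq12 hp1q2 hp2q1.symm
  have hsnd := Tdress_eq_Tdress_Tdress hV1 hW2 hR12' hp12 hq12 hp1q2 hp2q1.symm
  have h21 := trace_ne_zero_of_dress_ne_zero (hY2 ▸
    (inS_Tdress hX2 (Tden1_comm hX1 hX2 hp12 hq12 ▸ hR12)).ne_zero)
  rw [← hfst] at hsnd
  simp only [R12t, T13t, T23t, Tmap_eq_Tdress, Rmap_eq_Tdress hX1 hX2 hp12 hq12,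
    Rmap_eq_Tdress hV1 hW2 hp12 hq12]
  refine Prod.ext hfst (Prod.ext ?_ ?_)
  · rw [hsnd, hY2]
    exact mixed_YangBaxter_snd hY1 hX3 hq12 hq13 hq23 hp1q2 hp1q3 hp2q1 hp2q3 hp3q1 hp3q2
      h21 hT23 hT13
  · exact mixed_YangBaxter_thd hX1 hX2 hp12 hp23 hq12 hq13 hp1q3 hp2q1 hp2q3 hp3q1 hp3q2 hR12
      (Tden1_comm hX2 hX3 hp2q3 hp3q2.symm ▸ hT23) (Tden1_comm hY1 hX3 hp1q3 hp3q1.symm ▸ hT13)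

end MixedYangBaxter

/-- the mixed Yang–Baxter equation
`T₂₃ ∘ T₁₃ ∘ R₁₂ = R₁₂ ∘ T₁₃ ∘ T₂₃`. -/
theorem mixed_YangBaxter_T_T_R
    (m n : ℕ) (hm : 0 < m) (hn : 0 < n)
    (K : Matrix (Fin n) (Fin m) ℝ) (hK : K.rank = min n m)
    (p1 q1 p2 q2 p3 q3 : ℝ)
    (hp : List.Pairwise (· ≠ ·) [p1, p2, p3])
    (hq : List.Pairwise (· ≠ ·) [q1, q2, q3])
    (hpq11 : p1 ≠ q1) (hpq12 : p1 ≠ q2) (hpq13 : p1 ≠ q3)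
    (hpq21 : p2 ≠ q1) (hpq22 : p2 ≠ q2) (hpq23 : p2 ≠ q3)
    (hpq31 : p3 ≠ q1) (hpq32 : p3 ≠ q2) (hpq33 : p3 ≠ q3)
    (X1 X2 X3 : Mat m n) (hX1 : InS K X1) (hX2 : InS K X2) (hX3 : InS K X3)
    -- intermediate triples of the two compositions
    (U V U' V' : Mat m n × Mat m n × Mat m n)
    (hU : U = R12t K p1 q1 p2 q2 (X1, X2, X3))
    (hV : V = T13t K p1 q1 p3 q3 U)
    (hU' : U' = T23t K p2 q2 p3 q3 (X1, X2, X3))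
    (hV' : V' = T13t K p1 q1 p3 q3 U')
    -- every trace denominator and α-factor occurring is nonzero
    (ha1 : adenom K p1 q1 p2 q2 X1 X2 ≠ 0)
    (hd1 : Tden1 K p1 q1 p3 q3 U.1 U.2.2 ≠ 0)
    (hd2 : Tden2 K p1 q1 p3 q3 U.1 U.2.2 ≠ 0)
    (hd3 : Tden1 K p2 q2 p3 q3 V.2.1 V.2.2 ≠ 0)
    (hd4 : Tden2 K p2 q2 p3 q3 V.2.1 V.2.2 ≠ 0)
    (hd5 : Tden1 K p2 q2 p3 q3 X2 X3 ≠ 0)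
    (hd6 : Tden2 K p2 q2 p3 q3 X2 X3 ≠ 0)
    (hd7 : Tden1 K p1 q1 p3 q3 U'.1 U'.2.2 ≠ 0)
    (hd8 : Tden2 K p1 q1 p3 q3 U'.1 U'.2.2 ≠ 0)
    (ha2 : adenom K p1 q1 p2 q2 V'.1 V'.2.1 ≠ 0) :
    T23t K p2 q2 p3 q3 V = R12t K p1 q1 p2 q2 V' := by
  subst hU hV hU' hV'
  simp only [List.pairwise_cons, List.mem_cons, List.not_mem_nil, or_false, forall_eq_or_imp,
    forall_eq] at hp hq
  obtain ⟨⟨hp12, -⟩, hp23, -⟩ := hp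
  obtain ⟨⟨hq12, hq13⟩, hq23, -⟩ := hq
  exact mixed_YangBaxter_T_T_R_general hp12 hp23 hq12 hq13 hq23 hpq12 hpq13 hpq21 hpq23 hpq31
    hpq32 hX1 hX2 hX3 ha1 hd1 hd5 hd7
end

section
/- Let p1, p2, p3, q1, q2, q3 be reals with p1, p2, p3 pairwise distinct, q1, q2, q3 pairwise distinct, and p_i ≠ q_j for all i, j, and let X1, X2, X3 ∈ S. Assume all trace denominators and α-factors occurring in the compositions below are nonzero. Then Rinv_{23}(2,3) ∘ T_{13}(1,3) ∘ T_{12}(1,2) = T_{12}(1,2) ∘ T_{13}(1,3) ∘ Rinv_{23}(2,3) as maps on the triple (X1,X2,X3), where Rinv(p_i,q_i;p_j,q_j) denotes the inverse of R(p_i,q_i;p_j,q_j), given explicitly by Rinv(p_i,q_i;p_j,q_j)(Xi,Xj) = (A_j(q_i,Xj) Xi B̃_j(p_i,Xj) / tr[A_j(q_i,Xj) Xi B̃_j(p_i,Xj) K], B_i(p_j,Xi) Xj Ã_i(q_j,Xi) / tr[B_i(p_j,Xi) Xj Ã_i(q_j,Xi) K]), and the subscripts indicate on which two components the maps act. -/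
open Matrix

/-!
Embedding `X` as the block matrix with rows `(X K, X)` and `(0, 0)` turns `K`-projections into
ordinary rank-one projections, and `R⁻¹(p, q; r, s)` is `T(q, p; r, s)`. The map `T` dresses each
of two projections by the other, in such a way that the linear Lax factors `L(p, q; P)` satisfy
`L(p, q; P') L(r, s; Q) = L(r, s; Q') L(p, q; P)`. As `L(p, q; P) L(q, p; P)` is a central
polynomial, moving a factor across the relation swaps its parameters, so `R⁻¹` preserves the
product of two Lax factors. Hence the two sides of the equation dress the first projection by the
same product, and their first components agree. Pushing the Lax factors of the triple through both
compositions then gives two factorizations of one quadratic polynomial, with prescribed disjoint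
spectra; such a factorization is unique by Sylvester's theorem, which yields the other components.
-/

namespace YangBaxter

open Polynomial

section CommRing

variable {R A : Type*} [CommRing R] [Ring A] [Algebra R A]

/-- The element acting as `p` on the range and as `q` on the kernel of an idempotent `P`. -/
def spectralComb (p q : R) (P : A) : A :=
  q • 1 + (p - q) • P

lemma spectralComb_add_swap (p q : R) (P : A) :
    spectralComb p q P + spectralComb q p P = algebraMap R A p + algebraMap R A q := by
  simp only [spectralComb, Algebra.algebraMap_eq_smul_one]
  module

lemma spectralComb_mul_swap (p q : R) {P : A} (hP : IsIdempotentElem P) :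
    spectralComb p q P * spectralComb q p P = algebraMap R A p * algebraMap R A q := by
  simp only [spectralComb, Algebra.algebraMap_eq_smul_one, add_mul, mul_add, smul_mul_assoc,
    mul_smul_comm, one_mul, mul_one, hP.eq]
  module

lemma X_sub_C_mul_X_sub_C (a b : A) :
    (X - C a) * (X - C b) = X ^ 2 - C (a + b) * X + C (a * b) := by
  rw [sub_mul, mul_sub, mul_sub, X_mul_C, ← C_mul, C_add, add_mul, sq]
  abel

lemma X_sub_C_mul_X_sub_C_inj {a b c d : A} :
    (X - C a) * (X - C b) = (X - C c) * (X - C d) ↔ a + b = c + d ∧ a * b = c * d := by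
  rw [X_sub_C_mul_X_sub_C, X_sub_C_mul_X_sub_C]
  refine ⟨fun h => ⟨?_, ?_⟩, fun ⟨hadd, hmul⟩ => by rw [hadd, hmul]⟩
  · simpa only [coeff_add, coeff_sub, coeff_X_pow, coeff_C_mul, coeff_X_one, coeff_C_succ, mul_one,
      add_zero, OfNat.one_ne_ofNat, if_false, zero_sub, neg_inj] using congrArg (coeff · 1) h
  · simpa using congrArg (coeff · 0) h

/-- The Lax factor of a Darboux matrix, cleared of its denominator: in the notation of the
statement, `(λ - q) • A(p, q, λ, P)` as a polynomial in the spectral parameter `λ`. -/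
noncomputable def laxFactor (p q : R) (P : A) : A[X] :=
  X - C (spectralComb p q P)

lemma monic_laxFactor (p q : R) (P : A) : (laxFactor p q P).Monic :=
  monic_X_sub_C _

lemma laxFactor_mul_swap (p q : R) {P : A} (hP : IsIdempotentElem P) :
    laxFactor p q P * laxFactor q p P =
      (X - algebraMap R A[X] p) * (X - algebraMap R A[X] q) :=
  X_sub_C_mul_X_sub_C_inj.2 ⟨spectralComb_add_swap p q P, spectralComb_mul_swap p q hP⟩

lemma commute_X_sub_algebraMap (p : R) (F : A[X]) : Commute (X - algebraMap R A[X] p) F :=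
  (commute_X F).sub_left (Algebra.commutes p F)

-- Multiplying by the swapped factors turns both outer factors into the same central polynomial.
lemma mul_laxFactor_swap_eq {p q : R} {P Q : A} (hP : IsIdempotentElem P)
    (hQ : IsIdempotentElem Q) {F G : A[X]} (h : laxFactor p q Q * F = G * laxFactor p q P) :
    F * laxFactor q p P = laxFactor q p Q * G := by
  apply (monic_laxFactor p q Q).isRegular.left
  calc laxFactor p q Q * (F * laxFactor q p P)
      = G * (laxFactor p q P * laxFactor q p P) := by rw [← mul_assoc, h, mul_assoc]
    _ = (laxFactor p q Q * laxFactor q p Q) * G := by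
        rw [laxFactor_mul_swap p q hP, laxFactor_mul_swap p q hQ]
        exact (((commute_X_sub_algebraMap p G).mul_left (commute_X_sub_algebraMap q G)).eq).symm
    _ = laxFactor p q Q * (laxFactor q p Q * G) := mul_assoc ..

/-- Evaluation of a polynomial over `A` at a scalar; it is multiplicative because scalars are
central. -/
noncomputable def evalScalar (r : R) : A[X] →ₐ[R] A :=
  eval₂AlgHom (AlgHom.id R A) (algebraMap R A r) fun a => (Algebra.commutes r a).symm

lemma evalScalar_X (r : R) : evalScalar r (X : A[X]) = algebraMap R A r :=
  eval₂_X ..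

lemma evalScalar_C (r : R) (a : A) : evalScalar r (C a) = a :=
  eval₂_C ..

lemma evalScalar_laxFactor (l p q : R) (P : A) :
    evalScalar l (laxFactor p q P) = algebraMap R A l - spectralComb p q P := by
  rw [laxFactor, map_sub, evalScalar_X, evalScalar_C]

end CommRing

section Field

variable {𝕜 A : Type*} [Field 𝕜] [Ring A] [Algebra 𝕜 A]

lemma spectralComb_injective {p q : 𝕜} (hpq : p ≠ q) :
    Function.Injective (spectralComb p q : A → A) := fun _ _ h =>
  smul_right_injective A (sub_ne_zero.2 hpq) (add_left_cancel h)

lemma isUnit_evalScalar_laxFactor {l p q : 𝕜} {P : A} (hP : IsIdempotentElem P) (hp : l ≠ p)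
    (hq : l ≠ q) : IsUnit (evalScalar l (laxFactor p q P)) := by
  have hcomm : Commute (laxFactor p q P) (laxFactor q p P) := by
    rw [commute_iff_eq, laxFactor_mul_swap p q hP, laxFactor_mul_swap q p hP]
    exact commute_X_sub_algebraMap p _
  have hmul : evalScalar l (laxFactor p q P) * evalScalar l (laxFactor q p P) =
      algebraMap 𝕜 A ((l - p) * (l - q)) := by
    rw [← map_mul, laxFactor_mul_swap p q hP]
    simp only [map_mul, map_sub, evalScalar_X, AlgHom.commutes]
  have hunit := (IsUnit.mk0 _ (mul_ne_zero (sub_ne_zero.2 hp) (sub_ne_zero.2 hq))).map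
    (algebraMap 𝕜 A)
  rw [← hmul, (hcomm.map (evalScalar l)).isUnit_mul_iff] at hunit
  exact hunit.1

-- A Sylvester equation whose coefficients have the disjoint spectra `{p, q}` and `{r, s}`.
lemma eq_zero_of_spectralComb_mul_eq {p q r s : 𝕜} (hpr : p ≠ r) (hps : p ≠ s) (hqr : q ≠ r)
    (hqs : q ≠ s) {P Q Y : A} (hP : IsIdempotentElem P) (hQ : IsIdempotentElem Q)
    (h : spectralComb p q P * Y = Y * spectralComb r s Q) : Y = 0 := by
  have hsemiconj (l : 𝕜) : SemiconjBy Y (evalScalar l (laxFactor r s Q))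
      (evalScalar l (laxFactor p q P)) := by
    rw [evalScalar_laxFactor, evalScalar_laxFactor]
    exact SemiconjBy.sub_right (Algebra.commutes l Y).symm h.symm
  have hzero : evalScalar p (laxFactor p q P) * evalScalar q (laxFactor p q P) = 0 := by
    simp only [evalScalar_laxFactor, spectralComb, Algebra.algebraMap_eq_smul_one, sub_mul, mul_sub,
      add_mul, mul_add, smul_mul_assoc, mul_smul_comm, one_mul, mul_one, hP.eq]
    module
  have hunit := (isUnit_evalScalar_laxFactor hQ hpr hps).mul
    (isUnit_evalScalar_laxFactor hQ hqr hqs)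
  apply hunit.mul_left_eq_zero.1
  rw [((hsemiconj p).mul_right (hsemiconj q)).eq, hzero, zero_mul]

lemma laxFactor_mul_inj {p q r s : 𝕜} (hpq : p ≠ q) (hrs : r ≠ s) (hpr : p ≠ r) (hps : p ≠ s)
    (hqr : q ≠ r) (hqs : q ≠ s) {P P' Q Q' : A} (hP' : IsIdempotentElem P')
    (hQ : IsIdempotentElem Q)
    (h : laxFactor p q P * laxFactor r s Q = laxFactor p q P' * laxFactor r s Q') :
    P = P' ∧ Q = Q' := by
  obtain ⟨hadd, hmul⟩ := X_sub_C_mul_X_sub_C_inj.1 h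
  have hsylvester : spectralComb p q P' * (spectralComb r s Q - spectralComb r s Q') =
      (spectralComb r s Q - spectralComb r s Q') * spectralComb r s Q := by
    have hP : spectralComb p q P = spectralComb p q P' + spectralComb r s Q' -
      spectralComb r s Q := eq_sub_of_add_eq hadd
    rw [mul_sub, ← hmul, hP]
    noncomm_ring
  have hQQ' : spectralComb r s Q = spectralComb r s Q' :=
    sub_eq_zero.1 (eq_zero_of_spectralComb_mul_eq hpr hps hqr hqs hP' hQ hsylvester)
  rw [hQQ'] at hadd
  exact ⟨spectralComb_injective hpq (add_right_cancel hadd), spectralComb_injective hrs hQQ'⟩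

end Field

section Trace

variable {ι 𝕜 : Type*} [Fintype ι] [Field 𝕜]

/-- `M` rescaled to trace one; it is `0` when `M` has trace zero. -/
def traceNormalize (M : Matrix ι ι 𝕜) : Matrix ι ι 𝕜 :=
  M.trace⁻¹ • M

lemma traceNormalize_smul {c : 𝕜} (hc : c ≠ 0) (M : Matrix ι ι 𝕜) :
    traceNormalize (c • M) = traceNormalize M := by
  rw [traceNormalize, traceNormalize, trace_smul, smul_smul, smul_eq_mul, _root_.mul_inv_rev,
    inv_mul_cancel_right₀ hc]

/-- Rank-one projections, as normalised dyads `u vᵀ` with `vᵀ u = 1`. -/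
def IsRankOneProj (P : Matrix ι ι 𝕜) : Prop :=
  ∃ u v : ι → 𝕜, P = vecMulVec u v ∧ u ⬝ᵥ v = 1

namespace IsRankOneProj

variable {P : Matrix ι ι 𝕜}

lemma trace_eq_one (hP : IsRankOneProj P) : P.trace = 1 := by
  obtain ⟨u, v, rfl, huv⟩ := hP
  rw [trace_vecMulVec, huv]

lemma mul_mul_self (hP : IsRankOneProj P) (Z : Matrix ι ι 𝕜) :
    P * Z * P = (Z * P).trace • P := by
  obtain ⟨u, v, rfl, -⟩ := hP
  rw [Matrix.mul_assoc, mul_vecMulVec, vecMulVec_mul_vecMulVec, trace_vecMulVec, vecMulVec_smul,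
    dotProduct_comm]

lemma isIdempotentElem (hP : IsRankOneProj P) : IsIdempotentElem P := by
  obtain ⟨u, v, rfl, huv⟩ := hP
  rw [IsIdempotentElem, vecMulVec_mul_vecMulVec, dotProduct_comm, huv, one_smul]

lemma traceNormalize_mul_mul (hP : IsRankOneProj P) {M N : Matrix ι ι 𝕜}
    (h : (M * P * N).trace ≠ 0) : IsRankOneProj (traceNormalize (M * P * N)) := by
  obtain ⟨u, v, rfl, -⟩ := hP
  rw [mul_vecMulVec, vecMulVec_mul] at h ⊢
  rw [trace_vecMulVec] at h
  refine ⟨(M *ᵥ u ⬝ᵥ v ᵥ* N)⁻¹ • M *ᵥ u, v ᵥ* N, ?_, ?_⟩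
  · rw [traceNormalize, trace_vecMulVec, smul_vecMulVec]
  · rw [smul_dotProduct, smul_eq_mul, inv_mul_cancel₀ h]

end IsRankOneProj

end Trace

section Dressing

variable {ι 𝕜 : Type*} [Fintype ι] [DecidableEq ι] [Field 𝕜]

/-- The Darboux transform, before normalisation, of a projection `P` with parameters `p, q` by a
projection `Q` with parameters `r, s`. The right factor is the inverse of the left one with `p`
replaced by `q`, up to a scalar. -/
noncomputable def dressNum (p q r s : 𝕜) (P Q : Matrix ι ι 𝕜) : Matrix ι ι 𝕜 :=
  evalScalar p (laxFactor r s Q) * P * evalScalar q (laxFactor s r Q)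

/-- The projection onto which the Darboux transform by `Q` takes `P`. -/
noncomputable def dress (p q r s : 𝕜) (P Q : Matrix ι ι 𝕜) : Matrix ι ι 𝕜 :=
  traceNormalize (dressNum p q r s P Q)

variable {p q r s : 𝕜} {P Q : Matrix ι ι 𝕜}

lemma dressNum_eq (p q r s : 𝕜) (P Q : Matrix ι ι 𝕜) : dressNum p q r s P Q =
    ((p - s) • 1 - (r - s) • Q) * P * ((q - r) • 1 + (r - s) • Q) := by
  simp only [dressNum, evalScalar_laxFactor, spectralComb, Algebra.algebraMap_eq_smul_one]
  congr 1
  · congr 1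
    module
  · module

lemma IsRankOneProj.dressNum_expand (hQ : IsRankOneProj Q) (p q r s : 𝕜) (P : Matrix ι ι 𝕜) :
    dressNum p q r s P Q = ((p - s) * (q - r)) • P + ((p - s) * (r - s)) • (P * Q) -
      ((r - s) * (q - r)) • (Q * P) - ((r - s) ^ 2 * (P * Q).trace) • Q := by
  rw [dressNum_eq]
  simp only [sub_mul, mul_add, smul_mul_assoc, mul_smul_comm, one_mul, mul_one, hQ.mul_mul_self]
  module

lemma trace_dressNum (hP : IsRankOneProj P) (hQ : IsRankOneProj Q) (p q r s : 𝕜) :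
    (dressNum p q r s P Q).trace =
      (p - s) * (q - r) + (p - q) * (r - s) * (P * Q).trace := by
  rw [hQ.dressNum_expand]
  simp only [trace_sub, trace_add, trace_smul, hP.trace_eq_one, hQ.trace_eq_one,
    trace_mul_comm Q P, smul_eq_mul]
  ring

lemma trace_dressNum_comm (hP : IsRankOneProj P) (hQ : IsRankOneProj Q) (p q r s : 𝕜) :
    (dressNum r s p q Q P).trace = (dressNum p q r s P Q).trace := by
  rw [trace_dressNum hQ hP, trace_dressNum hP hQ, trace_mul_comm]
  ring

lemma IsRankOneProj.dress (hP : IsRankOneProj P) (h : (dressNum p q r s P Q).trace ≠ 0) :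
    IsRankOneProj (dress p q r s P Q) :=
  hP.traceNormalize_mul_mul h

-- Both dressings share the denominator `t`, so the two symmetric functions of the factors can be
-- compared as linear combinations of `P`, `Q`, `P * Q` and `Q * P`.
lemma laxFactor_dress_mul (hP : IsRankOneProj P) (hQ : IsRankOneProj Q)
    (h : (dressNum p q r s P Q).trace ≠ 0) :
    laxFactor p q (dress p q r s P Q) * laxFactor r s Q =
      laxFactor r s (dress r s p q Q P) * laxFactor p q P := by
  have hPQP : P * Q * P = (P * Q).trace • P := by rw [hP.mul_mul_self, trace_mul_comm]
  have hQPQ : Q * P * Q = (P * Q).trace • Q := hQ.mul_mul_self P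
  have htrace := trace_dressNum hP hQ p q r s
  simp only [dress, traceNormalize, trace_dressNum_comm hP hQ p q r s]
  generalize (dressNum p q r s P Q).trace = t at *
  rw [hQ.dressNum_expand, hP.dressNum_expand, trace_mul_comm Q P]
  generalize (P * Q).trace = τ at *
  apply X_sub_C_mul_X_sub_C_inj.2
  constructor
  · simp only [spectralComb]
    match_scalars <;> field_simp <;> (try rw [htrace]) <;> ring
  · simp only [spectralComb, add_mul, mul_add, sub_mul, mul_sub, smul_mul_assoc, mul_smul_comm,
      one_mul, mul_one, hPQP, hQPQ, hP.isIdempotentElem.eq, hQ.isIdempotentElem.eq,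
      Matrix.mul_assoc P Q Q, Matrix.mul_assoc Q P P]
    match_scalars <;> field_simp <;> (try rw [htrace]) <;> ring

lemma dress_dress {t u : 𝕜} {S : Matrix ι ι 𝕜} (h : (dressNum p q r s P Q).trace ≠ 0) :
    dress p q t u (dress p q r s P Q) S =
      traceNormalize (evalScalar p (laxFactor t u S * laxFactor r s Q) * P *
        evalScalar q (laxFactor s r Q * laxFactor u t S)) := by
  have hdress : dress p q r s P Q = (dressNum p q r s P Q).trace⁻¹ • dressNum p q r s P Q := rfl
  rw [dress, dressNum, hdress, mul_smul_comm, smul_mul_assoc,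
    traceNormalize_smul (inv_ne_zero h), dressNum]
  simp only [map_mul, Matrix.mul_assoc]

/-- `(P', Q')` is the image of the pair `(P, Q)` of rank-one projections, with parameters `p, q`
and `r, s`, under the map `T`, whose trace denominators do not vanish at `(P, Q)`. -/
structure IsDressedPair (p q r s : 𝕜) (P Q P' Q' : Matrix ι ι 𝕜) : Prop where
  proj_fst : IsRankOneProj P
  proj_snd : IsRankOneProj Q
  trace_ne_zero : (dressNum p q r s P Q).trace ≠ 0
  fst_eq : P' = dress p q r s P Q
  snd_eq : Q' = dress r s p q Q P

namespace IsDressedPair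

variable {P' Q' : Matrix ι ι 𝕜}

lemma proj_fst_dressed (h : IsDressedPair p q r s P Q P' Q') : IsRankOneProj P' := by
  rw [h.fst_eq]
  exact h.proj_fst.dress h.trace_ne_zero

lemma proj_snd_dressed (h : IsDressedPair p q r s P Q P' Q') : IsRankOneProj Q' := by
  rw [h.snd_eq]
  exact h.proj_snd.dress (trace_dressNum_comm h.proj_fst h.proj_snd p q r s ▸ h.trace_ne_zero)

lemma laxFactor_mul (h : IsDressedPair p q r s P Q P' Q') :
    laxFactor p q P' * laxFactor r s Q = laxFactor r s Q' * laxFactor p q P := by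
  rw [h.fst_eq, h.snd_eq]
  exact laxFactor_dress_mul h.proj_fst h.proj_snd h.trace_ne_zero

lemma laxFactor_mul_swap_fst (h : IsDressedPair p q r s P Q P' Q') :
    laxFactor r s Q * laxFactor q p P = laxFactor q p P' * laxFactor r s Q' :=
  mul_laxFactor_swap_eq h.proj_fst.isIdempotentElem h.proj_fst_dressed.isIdempotentElem
    h.laxFactor_mul

lemma laxFactor_mul_swap_snd (h : IsDressedPair p q r s P Q P' Q') :
    laxFactor p q P * laxFactor s r Q = laxFactor s r Q' * laxFactor p q P' :=
  mul_laxFactor_swap_eq h.proj_snd.isIdempotentElem h.proj_snd_dressed.isIdempotentElem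
    h.laxFactor_mul.symm

end IsDressedPair

end Dressing

section Cube

-- The index of `h₁₂`, `h₁₃`, `h₂₃` tells on which components of the triple the map acts; a prime
-- marks the right-hand side of the Yang–Baxter equation.
variable {ι 𝕜 : Type*} [Fintype ι] [DecidableEq ι] [Field 𝕜] {p₁ q₁ p₂ q₂ p₃ q₃ : 𝕜}
  {P₁ P₂ P₃ A₁ A₂ B₁ B₃ C₂ C₃ D₂ D₃ E₁ E₃ H₁ H₂ : Matrix ι ι 𝕜}

-- Both sides dress `P₁` by two projections; the products of the dressing Lax factors agree.
lemma cube_fst (h₁₂ : IsDressedPair p₁ q₁ p₂ q₂ P₁ P₂ A₁ A₂)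
    (h₁₃ : IsDressedPair p₁ q₁ p₃ q₃ A₁ P₃ B₁ B₃)
    (h₂₃' : IsDressedPair q₂ p₂ p₃ q₃ P₂ P₃ D₂ D₃)
    (h₁₃' : IsDressedPair p₁ q₁ p₃ q₃ P₁ D₃ E₁ E₃)
    (h₁₂' : IsDressedPair p₁ q₁ p₂ q₂ E₁ D₂ H₁ H₂) : B₁ = H₁ := by
  rw [h₁₃.fst_eq, h₁₂.fst_eq, dress_dress h₁₂.trace_ne_zero, h₂₃'.laxFactor_mul_swap_fst,
    h₂₃'.laxFactor_mul_swap_snd, ← dress_dress h₁₃'.trace_ne_zero, ← h₁₃'.fst_eq, ← h₁₂'.fst_eq]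

lemma laxFactor_mul_mul_eq_of_cube_left (h₁₂ : IsDressedPair p₁ q₁ p₂ q₂ P₁ P₂ A₁ A₂)
    (h₁₃ : IsDressedPair p₁ q₁ p₃ q₃ A₁ P₃ B₁ B₃)
    (h₂₃ : IsDressedPair q₂ p₂ p₃ q₃ A₂ B₃ C₂ C₃) :
    laxFactor p₂ q₂ C₂ * laxFactor p₃ q₃ C₃ * laxFactor p₁ q₁ P₁ =
      laxFactor p₁ q₁ B₁ * (laxFactor p₃ q₃ P₃ * laxFactor p₂ q₂ P₂) := by
  rw [← h₂₃.laxFactor_mul_swap_fst, mul_assoc, ← h₁₂.laxFactor_mul, ← mul_assoc,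
    ← h₁₃.laxFactor_mul, mul_assoc]

lemma laxFactor_mul_mul_eq_of_cube_right (h₂₃' : IsDressedPair q₂ p₂ p₃ q₃ P₂ P₃ D₂ D₃)
    (h₁₃' : IsDressedPair p₁ q₁ p₃ q₃ P₁ D₃ E₁ E₃)
    (h₁₂' : IsDressedPair p₁ q₁ p₂ q₂ E₁ D₂ H₁ H₂) :
    laxFactor p₂ q₂ H₂ * laxFactor p₃ q₃ E₃ * laxFactor p₁ q₁ P₁ =
      laxFactor p₁ q₁ H₁ * (laxFactor p₃ q₃ P₃ * laxFactor p₂ q₂ P₂) := by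
  rw [h₂₃'.laxFactor_mul_swap_fst, mul_assoc, ← h₁₃'.laxFactor_mul, ← mul_assoc,
    ← h₁₂'.laxFactor_mul, mul_assoc]

lemma cube_snd_trd (hp : p₂ ≠ p₃) (hq : q₂ ≠ q₃) (hpq₂₂ : p₂ ≠ q₂) (hpq₂₃ : p₂ ≠ q₃)
    (hpq₃₂ : p₃ ≠ q₂) (hpq₃₃ : p₃ ≠ q₃)
    (h₁₂ : IsDressedPair p₁ q₁ p₂ q₂ P₁ P₂ A₁ A₂)
    (h₁₃ : IsDressedPair p₁ q₁ p₃ q₃ A₁ P₃ B₁ B₃)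
    (h₂₃ : IsDressedPair q₂ p₂ p₃ q₃ A₂ B₃ C₂ C₃)
    (h₂₃' : IsDressedPair q₂ p₂ p₃ q₃ P₂ P₃ D₂ D₃)
    (h₁₃' : IsDressedPair p₁ q₁ p₃ q₃ P₁ D₃ E₁ E₃)
    (h₁₂' : IsDressedPair p₁ q₁ p₂ q₂ E₁ D₂ H₁ H₂) : C₂ = H₂ ∧ C₃ = E₃ := by
  refine laxFactor_mul_inj hpq₂₂ hpq₃₃ hp hpq₂₃ hpq₃₂.symm hq h₁₂'.proj_snd_dressed.isIdempotentElem
    h₂₃.proj_snd_dressed.isIdempotentElem ((monic_laxFactor p₁ q₁ P₁).isRegular.right ?_)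
  calc laxFactor p₂ q₂ C₂ * laxFactor p₃ q₃ C₃ * laxFactor p₁ q₁ P₁
      = laxFactor p₁ q₁ B₁ * (laxFactor p₃ q₃ P₃ * laxFactor p₂ q₂ P₂) :=
        laxFactor_mul_mul_eq_of_cube_left h₁₂ h₁₃ h₂₃
    _ = laxFactor p₁ q₁ H₁ * (laxFactor p₃ q₃ P₃ * laxFactor p₂ q₂ P₂) := by
        rw [cube_fst h₁₂ h₁₃ h₂₃' h₁₃' h₁₂']
    _ = laxFactor p₂ q₂ H₂ * laxFactor p₃ q₃ E₃ * laxFactor p₁ q₁ P₁ :=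
        (laxFactor_mul_mul_eq_of_cube_right h₂₃' h₁₃' h₁₂').symm

end Cube

section BlockEmbed

variable {m n R : Type*} [Fintype n] [CommRing R]

/-- The embedding of `m × n` matrices, multiplied by `(X, Y) ↦ X * K * Y`, into square matrices.
It turns `K`-projections into projections. -/
def blockEmbed (K : Matrix n m R) : Matrix m n R →ₗ[R] Matrix (m ⊕ n) (m ⊕ n) R where
  toFun X := fromBlocks (X * K) X 0 0
  map_add' X Y := by rw [fromBlocks_add, add_zero, add_zero, Matrix.add_mul]
  map_smul' c X := by
    rw [RingHom.id_apply, fromBlocks_smul, smul_zero, smul_zero, Matrix.smul_mul]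

variable (K : Matrix n m R)

lemma blockEmbed_apply (X : Matrix m n R) : blockEmbed K X = fromBlocks (X * K) X 0 0 :=
  rfl

lemma blockEmbed_injective : Function.Injective (blockEmbed K) := fun _ _ h =>
  (fromBlocks_inj.1 h).2.1

lemma blockEmbed_vecMulVec (u : m → R) (v : n → R) : blockEmbed K (vecMulVec u v) =
    vecMulVec (Sum.elim u 0) (Sum.elim (v ᵥ* K) v) := by
  rw [blockEmbed_apply, vecMulVec_mul]
  ext (i | i) (j | j) <;> simp [vecMulVec_apply]

variable [Fintype m]

lemma blockEmbed_mul (X Y : Matrix m n R) :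
    blockEmbed K (X * K * Y) = blockEmbed K X * blockEmbed K Y := by
  simp [blockEmbed_apply, fromBlocks_multiply, Matrix.mul_assoc]

lemma trace_blockEmbed (X : Matrix m n R) : (blockEmbed K X).trace = (X * K).trace := by
  simp [blockEmbed_apply, trace]

end BlockEmbed

lemma exists_eq_vecMulVec_of_rank_eq_one {m n 𝕜 : Type*} [Fintype n] [Field 𝕜]
    {X : Matrix m n 𝕜} (hX : X.rank = 1) : ∃ u v, X = vecMulVec u v := by
  classical
  rw [rank, finrank_eq_one_iff'] at hX
  obtain ⟨u, -, hu⟩ := hX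
  choose v hv using fun j => hu ⟨X.mulVecLin (Pi.single j 1), LinearMap.mem_range_self _ _⟩
  refine ⟨u, v, Matrix.ext fun i j => ?_⟩
  have hij : v j * (u : m → 𝕜) i = (X *ᵥ Pi.single j 1) i :=
    congrFun (congrArg Subtype.val (hv j)) i
  rw [vecMulVec_apply, mul_comm, hij, mulVec_single_one, col_apply]

section Map

variable {m n : ℕ} {K : Matrix (Fin n) (Fin m) ℝ} {p q r s : ℝ} {X Y : Mat m n}

lemma isRankOneProj_blockEmbed (hX : InS K X) : IsRankOneProj (blockEmbed K X) := by
  obtain ⟨hXKX, hrank⟩ := hX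
  have hidem : IsIdempotentElem (blockEmbed K X) := by
    rw [IsIdempotentElem, ← blockEmbed_mul, hXKX]
  have hne : blockEmbed K X ≠ 0 := by
    rw [Ne, map_eq_zero_iff _ (blockEmbed_injective K)]
    rintro rfl
    exact zero_ne_one (rank_zero.symm.trans hrank)
  obtain ⟨u, v, rfl⟩ := exists_eq_vecMulVec_of_rank_eq_one hrank
  rw [blockEmbed_vecMulVec] at hidem hne ⊢
  refine ⟨_, _, rfl, smul_left_injective ℝ hne ?_⟩
  beta_reduce
  rw [one_smul, dotProduct_comm, ← vecMulVec_smul, ← vecMulVec_mul_vecMulVec, hidem.eq]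

variable (X Y)

lemma blockEmbed_Amat_mul (hps : p ≠ s) : blockEmbed K (Amat K r s p Y * X) =
    (p - s)⁻¹ • (evalScalar p (laxFactor r s (blockEmbed K Y)) * blockEmbed K X) := by
  simp only [Amat, Matrix.sub_mul, Matrix.one_mul, Matrix.smul_mul, map_sub, map_smul,
    blockEmbed_mul, evalScalar_laxFactor, spectralComb, Algebra.algebraMap_eq_smul_one, add_mul]
  have hps' := sub_ne_zero.2 hps
  match_scalars <;> field_simp

lemma blockEmbed_mul_Btil (hqr : q ≠ r) : blockEmbed K (X * Btil K r s q Y) =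
    (q - r)⁻¹ • (blockEmbed K X * evalScalar q (laxFactor s r (blockEmbed K Y))) := by
  simp only [Btil, Matrix.mul_add, Matrix.mul_one, Matrix.mul_smul, map_add, map_smul,
    ← Matrix.mul_assoc, blockEmbed_mul, evalScalar_laxFactor, spectralComb, Matrix.mul_sub,
    Algebra.algebraMap_eq_smul_one]
  have hqr' := sub_ne_zero.2 hqr
  match_scalars <;> field_simp
  ring

lemma blockEmbed_Amat_mul_mul_Btil (hps : p ≠ s) (hqr : q ≠ r) :
    blockEmbed K (Amat K r s p Y * X * Btil K r s q Y) =
      ((q - r)⁻¹ * (p - s)⁻¹) • dressNum p q r s (blockEmbed K X) (blockEmbed K Y) := by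
  rw [blockEmbed_mul_Btil _ _ hqr, blockEmbed_Amat_mul _ _ hps, smul_mul_assoc, smul_smul, dressNum]

lemma Tden1_eq (hps : p ≠ s) (hqr : q ≠ r) : Tden1 K p q r s X Y =
    (q - r)⁻¹ * (p - s)⁻¹ * (dressNum p q r s (blockEmbed K X) (blockEmbed K Y)).trace := by
  rw [Tden1, ← trace_blockEmbed, blockEmbed_Amat_mul_mul_Btil X Y hps hqr, trace_smul, smul_eq_mul]

lemma blockEmbed_Tmap_fst (hps : p ≠ s) (hqr : q ≠ r) :
    blockEmbed K (Tmap K p q r s (X, Y)).1 =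
      dress p q r s (blockEmbed K X) (blockEmbed K Y) := by
  rw [dress, ← traceNormalize_smul (mul_ne_zero (inv_ne_zero (sub_ne_zero.2 hqr))
    (inv_ne_zero (sub_ne_zero.2 hps))), ← blockEmbed_Amat_mul_mul_Btil X Y hps hqr,
    traceNormalize, trace_blockEmbed, ← map_smul]
  rfl

lemma Tmap_snd (p q r s : ℝ) : (Tmap K p q r s (X, Y)).2 = (Tmap K r s p q (Y, X)).1 :=
  rfl

variable {X Y}

lemma isDressedPair_Tmap (hps : p ≠ s) (hqr : q ≠ r) (hX : IsRankOneProj (blockEmbed K X))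
    (hY : IsRankOneProj (blockEmbed K Y)) (hden : Tden1 K p q r s X Y ≠ 0) :
    IsDressedPair p q r s (blockEmbed K X) (blockEmbed K Y)
      (blockEmbed K (Tmap K p q r s (X, Y)).1) (blockEmbed K (Tmap K p q r s (X, Y)).2) where
  proj_fst := hX
  proj_snd := hY
  trace_ne_zero := right_ne_zero_of_mul (Tden1_eq X Y hps hqr ▸ hden)
  fst_eq := blockEmbed_Tmap_fst X Y hps hqr
  snd_eq := by rw [Tmap_snd, blockEmbed_Tmap_fst Y X hqr.symm hps.symm]

variable (K)

lemma Bmat_eq_Amat (p q l : ℝ) (X : Mat m n) : Bmat K p q l X = Amat K q p l X := by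
  rw [Bmat, Amat, ← neg_sub q p, neg_div, neg_smul, ← sub_eq_add_neg]

lemma Atil_eq_Btil (p q l : ℝ) (X : Mat m n) : Atil K p q l X = Btil K q p l X := by
  rw [Atil, Btil, ← neg_sub q p, neg_div, neg_smul, sub_neg_eq_add]

lemma Rinvmap_eq_Tmap (p q r s : ℝ) (X : Mat m n × Mat m n) :
    Rinvmap K p q r s X = Tmap K q p r s X := by
  rw [Rinvmap, Rinvden2, Bmat_eq_Amat, Atil_eq_Btil]
  rfl

end Map

end YangBaxter

open YangBaxter in
theorem mixed_YangBaxter_Rinv_T_T_general {m n : ℕ} (K : Matrix (Fin n) (Fin m) ℝ)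
    {p1 q1 p2 q2 p3 q3 : ℝ} (hp : p2 ≠ p3) (hq : q2 ≠ q3)
    (hpq12 : p1 ≠ q2) (hpq13 : p1 ≠ q3) (hpq21 : p2 ≠ q1) (hpq22 : p2 ≠ q2) (hpq23 : p2 ≠ q3)
    (hpq31 : p3 ≠ q1) (hpq32 : p3 ≠ q2) (hpq33 : p3 ≠ q3)
    {X1 X2 X3 : Mat m n} (hX1 : InS K X1) (hX2 : InS K X2) (hX3 : InS K X3)
    {U V U' V' : Mat m n × Mat m n × Mat m n}
    (hU : U = T12t K p1 q1 p2 q2 (X1, X2, X3))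
    (hV : V = T13t K p1 q1 p3 q3 U)
    (hU' : U' = Rinv23t K p2 q2 p3 q3 (X1, X2, X3))
    (hV' : V' = T13t K p1 q1 p3 q3 U')
    (h12 : Tden1 K p1 q1 p2 q2 X1 X2 ≠ 0)
    (h13 : Tden1 K p1 q1 p3 q3 U.1 U.2.2 ≠ 0)
    (h23 : Rinvden1 K p2 q2 p3 q3 V.2.1 V.2.2 ≠ 0)
    (h23' : Rinvden1 K p2 q2 p3 q3 X2 X3 ≠ 0)
    (h13' : Tden1 K p1 q1 p3 q3 U'.1 U'.2.2 ≠ 0)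
    (h12' : Tden1 K p1 q1 p2 q2 V'.1 V'.2.1 ≠ 0) :
    Rinv23t K p2 q2 p3 q3 V = T12t K p1 q1 p2 q2 V' := by
  rw [Rinv23t, Rinvmap_eq_Tmap] at hU' ⊢
  subst hU hV hU' hV'
  have d12 := isDressedPair_Tmap hpq12 hpq21.symm (isRankOneProj_blockEmbed hX1)
    (isRankOneProj_blockEmbed hX2) h12
  have d13 := isDressedPair_Tmap hpq13 hpq31.symm d12.proj_fst_dressed
    (isRankOneProj_blockEmbed hX3) h13
  have d23 := isDressedPair_Tmap hq hp d12.proj_snd_dressed d13.proj_snd_dressed h23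
  have d23' := isDressedPair_Tmap hq hp (isRankOneProj_blockEmbed hX2)
    (isRankOneProj_blockEmbed hX3) h23'
  have d13' := isDressedPair_Tmap hpq13 hpq31.symm (isRankOneProj_blockEmbed hX1)
    d23'.proj_snd_dressed h13'
  have d12' := isDressedPair_Tmap hpq12 hpq21.symm d13'.proj_fst_dressed
    d23'.proj_fst_dressed h12'
  obtain ⟨h2, h3⟩ := cube_snd_trd hp hq hpq22 hpq23 hpq32 hpq33 d12 d13 d23 d23' d13' d12'
  exact Prod.ext (blockEmbed_injective K (cube_fst d12 d13 d23' d13' d12'))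
    (Prod.ext (blockEmbed_injective K h2) (blockEmbed_injective K h3))

/-- the mixed Yang–Baxter equation
`Rinv₂₃ ∘ T₁₃ ∘ T₁₂ = T₁₂ ∘ T₁₃ ∘ Rinv₂₃`. -/
theorem mixed_YangBaxter_Rinv_T_T
    (m n : ℕ) (hm : 0 < m) (hn : 0 < n)
    (K : Matrix (Fin n) (Fin m) ℝ) (hK : K.rank = min n m)
    (p1 q1 p2 q2 p3 q3 : ℝ)
    (hp : List.Pairwise (· ≠ ·) [p1, p2, p3])
    (hq : List.Pairwise (· ≠ ·) [q1, q2, q3])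
    (hpq11 : p1 ≠ q1) (hpq12 : p1 ≠ q2) (hpq13 : p1 ≠ q3)
    (hpq21 : p2 ≠ q1) (hpq22 : p2 ≠ q2) (hpq23 : p2 ≠ q3)
    (hpq31 : p3 ≠ q1) (hpq32 : p3 ≠ q2) (hpq33 : p3 ≠ q3)
    (X1 X2 X3 : Mat m n) (hX1 : InS K X1) (hX2 : InS K X2) (hX3 : InS K X3)
    -- intermediate triples of the two compositions
    (U V U' V' : Mat m n × Mat m n × Mat m n)
    (hU : U = T12t K p1 q1 p2 q2 (X1, X2, X3))
    (hV : V = T13t K p1 q1 p3 q3 U)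
    (hU' : U' = Rinv23t K p2 q2 p3 q3 (X1, X2, X3))
    (hV' : V' = T13t K p1 q1 p3 q3 U')
    -- every trace denominator occurring is nonzero
    (hd1 : Tden1 K p1 q1 p2 q2 X1 X2 ≠ 0)
    (hd2 : Tden2 K p1 q1 p2 q2 X1 X2 ≠ 0)
    (hd3 : Tden1 K p1 q1 p3 q3 U.1 U.2.2 ≠ 0)
    (hd4 : Tden2 K p1 q1 p3 q3 U.1 U.2.2 ≠ 0)
    (hd5 : Rinvden1 K p2 q2 p3 q3 V.2.1 V.2.2 ≠ 0)
    (hd6 : Rinvden2 K p2 q2 p3 q3 V.2.1 V.2.2 ≠ 0)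
    (hd7 : Rinvden1 K p2 q2 p3 q3 X2 X3 ≠ 0)
    (hd8 : Rinvden2 K p2 q2 p3 q3 X2 X3 ≠ 0)
    (hd9 : Tden1 K p1 q1 p3 q3 U'.1 U'.2.2 ≠ 0)
    (hd10 : Tden2 K p1 q1 p3 q3 U'.1 U'.2.2 ≠ 0)
    (hd11 : Tden1 K p1 q1 p2 q2 V'.1 V'.2.1 ≠ 0)
    (hd12 : Tden2 K p1 q1 p2 q2 V'.1 V'.2.1 ≠ 0) :
    Rinv23t K p2 q2 p3 q3 V = T12t K p1 q1 p2 q2 V' := by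
  have hp23 : p2 ≠ p3 := List.pairwise_pair.1 hp.of_cons
  have hq23 : q2 ≠ q3 := List.pairwise_pair.1 hq.of_cons
  exact mixed_YangBaxter_Rinv_T_T_general K hp23 hq23 hpq12 hpq13 hpq21 hpq22 hpq23 hpq31 hpq32
    hpq33 hX1 hX2 hX3 hU hV hU' hV' hd1 hd3 hd5 hd7 hd9 hd11
end
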